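/- arXiv:1305.4532 — 7 statements merged into one kernel-verified Lean document; each statement's English description precedes it below -/
import Mathlib

section
/- (Erdős–Rado theorem.) Let κ be an infinite cardinal and r ≥ 2 a finite number. Then (exp_r(κ))⁺ → (κ⁺)^{r+1}_κ: for every set S of cardinality (exp_r(κ))⁺ and every function f from the (r+1)-element subsets of S into a set of colours of cardinality at most κ, there exists a subset H ⊆ S of cardinality κ⁺ such that f is constant on the (r+1)-element subsets of H. -/
open Cardinal

/-- Iterated exponential: `expIter 0 κ = κ`, `expIter (m+1) κ = 2 ^ expIter m κ`. -/
def expIter : ℕ → Cardinal → Cardinal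
  | 0, κ => κ
  | m + 1, κ => 2 ^ expIter m κ

theorem er_closure {μ : Cardinal.{u}} (hμ : ℵ₀ ≤ μ) (S C : Type u) (hC : #C ≤ μ) [DecidableEq S]
    (f : Finset S → C) (s0 : S) :
    ∃ B : Set S, #B ≤ 2 ^ μ ∧ ∀ X ⊆ B, #X ≤ μ → ∀ y, y ∉ B →
      ∃ b ∈ B, b ∉ X ∧ ∀ t : Finset S, ↑t ⊆ X → f (insert b t) = f (insert y t) := by
  classical
  let M : Type u := μ.out
  have hM : #M = μ := mk_out μ
  have : Infinite M := by rw [infinite_iff, hM]; exact hμ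
  let A : Type u := Option (Finset M → C)
  let β : A → Type u := fun a => match a with
    | none => PEmpty
    | some _ => M
  have hμ2 : μ < 2 ^ μ := cantor μ
  have hinf : ℵ₀ ≤ (2 : Cardinal.{u}) ^ μ := hμ.trans hμ2.le
  have hpow : ((2 : Cardinal.{u}) ^ μ) ^ μ = 2 ^ μ := by
    rw [← power_mul, mul_eq_self hμ]
  have hA : #A ≤ 2 ^ μ := by
    have : #(Finset M → C) ≤ 2 ^ μ := by
      rw [← power_def, mk_finset_of_infinite, hM, ← hpow]
      exact power_le_power_right (hC.trans hμ2.le)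
    rw [mk_option]
    exact (add_le_add this (one_le_aleph0.trans hinf)).trans (add_eq_self hinf).le
  have hW : #(WType β) ≤ 2 ^ μ := by
    apply WType.cardinalMk_le_of_le
    have : ∀ a : A, ((2 : Cardinal.{u}) ^ μ) ^ #(β a) ≤ 2 ^ μ := by
      intro a
      cases a with
      | none =>
        show ((2 : Cardinal.{u}) ^ μ) ^ #PEmpty ≤ 2 ^ μ
        rw [mk_pempty, power_zero]
        exact one_le_aleph0.trans hinf
      | some τ =>
        show ((2 : Cardinal.{u}) ^ μ) ^ #M ≤ 2 ^ μ
        rw [hM, hpow]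
    refine (sum_le_sum _ _ this).trans ?_
    rw [sum_const']
    exact (mul_le_mul' hA le_rfl).trans (mul_eq_self hinf).le
  let Q : (Finset M → C) → (M → S) → S → Prop := fun τ w s =>
    s ∉ Set.range w ∧ ∀ t : Finset M, f (insert s (t.image w)) = τ t
  let step : (Σ a : A, β a → S) → S := fun p => match p with
    | ⟨none, _⟩ => s0
    | ⟨some τ, w⟩ => if h : ∃ s, Q τ w s then h.choose else s0
  let ev : WType β → S := WType.elim S step
  refine ⟨Set.range ev, mk_range_le.trans hW, ?_⟩
  intro X hX hXc y hy
  let b0 : WType β := WType.mk (none : A) (fun x => PEmpty.elim x)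
  let X' : Set S := insert (ev b0) X
  have hX' : X' ⊆ Set.range ev := Set.insert_subset ⟨b0, rfl⟩ hX
  have hXc' : #X' ≤ #M := by
    rw [hM]
    exact (mk_insert_le).trans ((add_le_add hXc (one_le_aleph0.trans hμ)).trans (add_eq_self hμ).le)
  have : Nonempty X' := ⟨⟨ev b0, Set.mem_insert _ _⟩⟩
  obtain ⟨e⟩ := hXc'
  let g : M → X' := Function.invFun e
  have hg : Function.Surjective g := Function.invFun_surjective e.injective
  choose w hw using fun m => hX' (g m).2
  have hrange : Set.range (fun m => ev (w m)) = X' := by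
    ext s
    constructor
    · rintro ⟨m, rfl⟩
      show ev (w m) ∈ X'
      rw [hw]; exact (g m).2
    · intro hs
      obtain ⟨m, hm⟩ := hg ⟨s, hs⟩
      exact ⟨m, by show ev (w m) = s; rw [hw, hm]⟩
  let τ : Finset M → C := fun t => f (insert y (t.image fun m => ev (w m)))
  have hex : ∃ s, Q τ (fun m => ev (w m)) s := by
    refine ⟨y, ?_, fun t => rfl⟩
    rw [hrange]
    exact fun h => hy (hX' h)
  have hb : Q τ (fun m => ev (w m)) (ev (WType.mk (some τ : A) w)) := by
    have : ev (WType.mk (some τ : A) w) = hex.choose := by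
      show (if h : ∃ s, Q τ (fun m => ev (w m)) s then h.choose else s0) = _
      rw [dif_pos hex]
    rw [this]
    exact hex.choose_spec
  refine ⟨_, ⟨_, rfl⟩, fun h => hb.1 (by rw [hrange]; exact Or.inr h), ?_⟩
  intro t ht
  have ht' : ↑t ⊆ (fun m => ev (w m)) '' Set.univ := by
    rw [Set.image_univ, hrange]; exact ht.trans (Set.subset_insert _ _)
  obtain ⟨t', -, rfl⟩ := Finset.subset_set_image_iff.1 ht'
  exact hb.2 t'

theorem er_seq {μ : Cardinal.{u}} (hμ : ℵ₀ ≤ μ) (S C : Type u) (hC : #C ≤ μ) [DecidableEq S]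
    (hS : Order.succ (2 ^ μ) ≤ #S) (f : Finset S → C) :
    ∃ (y : S) (a : (Order.succ μ).ord.ToType → S), Function.Injective a ∧
      ∀ i, ∀ t : Finset S, ↑t ⊆ a '' Set.Iio i → f (insert (a i) t) = f (insert y t) := by
  classical
  have hne : #S ≠ 0 := fun h => by
    rw [h] at hS
    exact absurd (Order.succ_le_iff.1 hS) not_lt_zero
  obtain ⟨s0⟩ := mk_ne_zero_iff.1 hne
  obtain ⟨B, hB, hcl⟩ := er_closure hμ S C hC f s0
  have : ∃ y, y ∉ B := by
    by_contra! h
    have : B = Set.univ := Set.eq_univ_of_forall h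
    rw [this, mk_univ] at hB
    exact absurd (hS.trans hB) (not_le.2 (Order.lt_succ _))
  obtain ⟨y, hy⟩ := this
  have hG : ∀ X : Set S, ∃ b, X ⊆ B → #X ≤ μ → (b ∈ B ∧ b ∉ X ∧
      ∀ t : Finset S, ↑t ⊆ X → f (insert b t) = f (insert y t)) := by
    intro X
    by_cases h : X ⊆ B ∧ #X ≤ μ
    · obtain ⟨b, h1, h2, h3⟩ := hcl X h.1 h.2 y hy
      exact ⟨b, fun _ _ => ⟨h1, h2, h3⟩⟩
    · exact ⟨s0, fun h1 h2 => absurd ⟨h1, h2⟩ h⟩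
  choose G hG using hG
  let J := (Order.succ μ).ord.ToType
  have wf : WellFounded ((· < ·) : J → J → Prop) := wellFounded_lt
  let a : J → S := wf.fix (fun i rec => G {s | ∃ j, ∃ h : j < i, rec j h = s})
  have ha : ∀ i, a i = G (a '' Set.Iio i) := by
    intro i
    show wf.fix _ i = _
    rw [WellFounded.fix_eq]
    congr 1
    ext s
    simp only [Set.mem_setOf_eq, Set.mem_image, Set.mem_Iio, exists_prop]
    rfl
  have hcard : ∀ i, #(a '' Set.Iio i) ≤ μ := fun i =>
    mk_image_le.trans (Order.lt_succ_iff.1 (mk_Iio_toType_ord_lt i))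
  have haB : ∀ i, a i ∈ B := by
    intro i
    induction i using wf.induction with
    | _ i ih =>
      rw [ha]
      refine (hG _ ?_ (hcard i)).1
      rintro _ ⟨j, hj, rfl⟩
      exact ih j hj
  have hsub : ∀ i, a '' Set.Iio i ⊆ B := by
    rintro i _ ⟨j, -, rfl⟩
    exact haB j
  refine ⟨y, a, ?_, ?_⟩
  · have key : ∀ i j, j < i → a j ≠ a i := by
      intro i j hj h
      have := (hG _ (hsub i) (hcard i)).2.1
      rw [← ha] at this
      exact this ⟨j, hj, h⟩
    intro i j h
    rcases lt_trichotomy i j with h' | h' | h'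
    · exact absurd h (key _ _ h')
    · exact h'
    · exact absurd h.symm (key _ _ h')
  · intro i t ht
    have := (hG _ (hsub i) (hcard i)).2.2 t ht
    rwa [← ha] at this

theorem er_le_expIter (κ : Cardinal.{u}) (r : ℕ) : κ ≤ expIter r κ := by
  induction r with
  | zero => exact le_rfl
  | succ r ih => exact ih.trans (cantor _).le

theorem er_main (κ : Cardinal.{u}) (hκ : ℵ₀ ≤ κ) (C : Type u) (hC : #C ≤ κ) (r : ℕ) :
    ∀ (S : Type u), Order.succ (expIter r κ) ≤ #S → ∀ f : Finset S → C,
    ∃ H : Set S, Order.succ κ ≤ #H ∧ ∃ c, ∀ t : Finset S, ↑t ⊆ H → t.card = r + 1 → f t = c := by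
  classical
  induction r with
  | zero =>
    intro S hS f
    have hreg := isRegular_succ hκ
    obtain ⟨c, hc⟩ := infinite_pigeonhole_card (fun s => f {s}) (Order.succ κ) hS hreg.1
      (by rw [hreg.cof_ord]; exact Order.lt_succ_iff.2 hC)
    refine ⟨_, hc, c, ?_⟩
    intro t ht h1
    obtain ⟨s, rfl⟩ := Finset.card_eq_one.1 h1
    exact ht (by simp : s ∈ (↑({s} : Finset S) : Set S))
  | succ r ih =>
    intro S hS f
    have hle := er_le_expIter κ r
    obtain ⟨y, a, hinj, ha⟩ := er_seq (hκ.trans hle) S C (hC.trans hle) hS f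
    obtain ⟨H, hH, c, hc⟩ := ih (Order.succ (expIter r κ)).ord.ToType (mk_ord_toType _).ge
      (fun t => f (insert y (t.image a)))
    refine ⟨a '' H, by rwa [mk_image_eq hinj], c, ?_⟩
    intro u hu hcard
    obtain ⟨v, hv, rfl⟩ := Finset.subset_set_image_iff.1 hu
    rw [Finset.card_image_of_injective _ hinj] at hcard
    have hne : v.Nonempty := Finset.card_pos.1 (by omega)
    have hm := v.max'_mem hne
    rw [← Finset.insert_erase hm, Finset.image_insert, ha]
    · refine hc _ ?_ ?_
      · exact (Finset.coe_subset.2 (Finset.erase_subset _ _)).trans hv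
      · rw [Finset.card_erase_of_mem hm]; omega
    · rw [Finset.coe_image]
      apply Set.image_mono
      intro x hx
      exact Finset.lt_max'_of_mem_erase_max' _ hne hx

/-- **Erdős–Rado theorem.** For an infinite cardinal `κ` and finite `r ≥ 2`,
`(exp_r κ)⁺ → (κ⁺)^{r+1}_κ`: any colouring of the `(r+1)`-element subsets of a set `S`
of cardinality `(exp_r κ)⁺` in at most `κ` colours has a homogeneous set of cardinality `κ⁺`. -/
theorem erdosRado (κ : Cardinal.{u}) (hκ : ℵ₀ ≤ κ) (r : ℕ) (hr : 2 ≤ r)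
    (S : Type u) (hS : #S = Order.succ (expIter r κ))
    (C : Type u) (hC : #C ≤ κ) (f : Finset S → C) :
    ∃ H : Set S, #H = Order.succ κ ∧
      ∀ t u : Finset S, ↑t ⊆ H → ↑u ⊆ H →
        t.card = r + 1 → u.card = r + 1 → f t = f u := by
  obtain ⟨H, hH, c, hc⟩ := er_main κ hκ C hC r S hS.ge f
  obtain ⟨H', hsub, hH'⟩ := le_mk_iff_exists_subset.1 hH
  exact ⟨H', hH', fun t u ht hu h1 h2 =>
    (hc t (ht.trans hsub) h1).trans (hc u (hu.trans hsub) h2).symm⟩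
end

section
/- (Erdős.) For every natural number k there exists a finite simple graph G whose chromatic number is strictly greater than k and whose girth (the length of its shortest cycle) is strictly greater than k. -/
namespace ErdosGirth

open Finset

/-- Edges of the walk starting at `a` and visiting the vertices of the list. -/
def edgesOf {V : Type} : V → List V → List (Sym2 V)
  | _, [] => []
  | a, b :: l => s(a, b) :: edgesOf b l

lemma edgesOf_length {V : Type} (a : V) (l : List V) : (edgesOf a l).length = l.length := by
  induction l generalizing a with
  | nil => rfl
  | cons b l ih => simp [edgesOf, ih]

lemma walk_edges {V : Type} {G : SimpleGraph V} {u v : V} (w : G.Walk u v) :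
    w.edges = edgesOf u w.support.tail := by
  induction w with
  | nil => rfl
  | cons h p ih =>
    rw [SimpleGraph.Walk.edges_cons, ih, SimpleGraph.Walk.support_cons, List.tail_cons]
    conv_rhs => rw [← SimpleGraph.Walk.cons_tail_support p]
    simp [edgesOf]

lemma walk_last {V : Type} {G : SimpleGraph V} {u v : V} (w : G.Walk u v) (x : V)
    (h : 0 < w.length) : w.support.tail.getLastD x = v := by
  induction w generalizing x with
  | nil => simp at h
  | @cons a b c h p ih =>
    rw [SimpleGraph.Walk.support_cons, List.tail_cons]
    rw [← SimpleGraph.Walk.cons_tail_support p, List.getLastD_cons]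
    cases p with
    | nil => simp
    | cons h' p' => exact ih _ (by simp)

/-- Counting functions constrained on a finite set. -/
lemma count_fun {E A : Type} [Fintype E] [DecidableEq E] [Fintype A] [DecidableEq A] [Nonempty A]
    (T : Finset E) (S : Finset A) :
    ((univ.filter (fun f : E → A => ∀ e ∈ T, f e ∈ S)).card : ℝ)
      = ((S.card : ℝ) / Fintype.card A) ^ T.card * Fintype.card (E → A) := by
  have h1 : univ.filter (fun f : E → A => ∀ e ∈ T, f e ∈ S)
      = Fintype.piFinset (fun e => if e ∈ T then S else univ) := by
    ext f
    simp only [mem_filter, mem_univ, true_and, Fintype.mem_piFinset]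
    refine forall_congr' fun e => ?_
    by_cases h : e ∈ T <;> simp [h]
  have h2 : ∀ e, ((if e ∈ T then S else univ : Finset A).card : ℝ)
      = (if e ∈ T then (S.card : ℝ) / Fintype.card A else 1) * Fintype.card A := by
    intro e
    have : (Fintype.card A : ℝ) ≠ 0 := by simp
    by_cases h : e ∈ T
    · simp [h]
    · simp [h]
  rw [h1, Fintype.card_piFinset, Nat.cast_prod, Finset.prod_congr rfl (fun e _ => h2 e),
    Finset.prod_mul_distrib]
  simp [Finset.prod_ite_mem, div_pow]

/-- The closed walk described by a list of vertices uses distinct edges, all labelled zero. -/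
def Bad {V : Type} {q : ℕ} (x : V) (f : Sym2 V → Fin (q + 1)) (L : List V) : Prop :=
  (edgesOf (L.getLastD x) L).Nodup ∧ ∀ e ∈ edgesOf (L.getLastD x) L, f e = 0

/-- No pair inside `S` is labelled zero. -/
def Ind {V : Type} {q : ℕ} (f : Sym2 V → Fin (q + 1)) (S : Finset V) : Prop :=
  ∀ a ∈ S, ∀ b ∈ S, a ≠ b → f s(a, b) ≠ 0

open Classical in
noncomputable def X {V : Type} [Fintype V] {q : ℕ} (k : ℕ) (x : V) (f : Sym2 V → Fin (q + 1)) : ℕ :=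
  ∑ l ∈ Icc 1 k, (univ.filter (fun L : List.Vector V l => Bad x f L.toList)).card

open Classical in
noncomputable def Y {V : Type} [Fintype V] {q : ℕ} (m : ℕ) (f : Sym2 V → Fin (q + 1)) : ℕ :=
  ((powersetCard m univ).filter (fun S : Finset V => Ind f S)).card

open Classical in
lemma sum_X {V : Type} [Fintype V] {q : ℕ} (k D : ℕ) (hD : 1 ≤ D) (x : V)
    (hV : Fintype.card V = (q + 1) * D) :
    ((∑ f : Sym2 V → Fin (q + 1), X k x f : ℕ) : ℝ)
      ≤ k * D ^ k * Fintype.card (Sym2 V → Fin (q + 1)) := by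
  set N : ℝ := (Fintype.card (Sym2 V → Fin (q + 1)) : ℝ) with hN
  have key : ∀ l (L : List.Vector V l),
      ((univ.filter (fun f : Sym2 V → Fin (q + 1) => Bad x f L.toList)).card : ℝ)
        ≤ (1 / (q + 1 : ℝ)) ^ l * N := by
    intro l L
    by_cases hn : (edgesOf (L.toList.getLastD x) L.toList).Nodup
    · have := count_fun (A := Fin (q + 1)) (edgesOf (L.toList.getLastD x) L.toList).toFinset {0}
      rw [List.toFinset_card_of_nodup hn, edgesOf_length, L.toList_length] at this
      simp only [card_singleton, Fintype.card_fin, Nat.cast_one, Nat.cast_add] at this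
      rw [← hN] at this
      rw [← this]
      gcongr with f
      intro h
      simpa using h.2
    · have : univ.filter (fun f : Sym2 V → Fin (q + 1) => Bad x f L.toList) = ∅ := by
        exact filter_eq_empty_iff.2 fun f _ h => hn h.1
      rw [this]
      simp only [card_empty, Nat.cast_zero]
      positivity
  have hswap : ∑ f : Sym2 V → Fin (q + 1), X k x f = ∑ l ∈ Icc 1 k, ∑ L : List.Vector V l,
      (univ.filter (fun f : Sym2 V → Fin (q + 1) => Bad x f L.toList)).card := by
    unfold X
    rw [Finset.sum_comm]
    refine Finset.sum_congr rfl fun l _ => ?_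
    simp only [Finset.card_filter]
    rw [Finset.sum_comm]
  rw [hswap]
  push_cast
  have hD' : (1 : ℝ) ≤ D := by exact_mod_cast hD
  calc _ ≤ ∑ l ∈ Icc 1 k, (D : ℝ) ^ k * N := by
        refine Finset.sum_le_sum fun l hl => ?_
        calc _ ≤ ∑ L : List.Vector V l, (1 / (q + 1 : ℝ)) ^ l * N :=
              Finset.sum_le_sum fun L _ => key l L
          _ = (D : ℝ) ^ l * N := by
              rw [Finset.sum_const, Finset.card_univ, card_vector, hV, nsmul_eq_mul, ← mul_assoc]
              congr 1
              push_cast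
              rw [← mul_pow]
              congr 1
              field_simp
          _ ≤ _ := by
              gcongr
              exact (Finset.mem_Icc.1 hl).2
    _ = _ := by simp [mul_assoc]

open Classical in
lemma sum_Y {V : Type} [Fintype V] {q : ℕ} (m : ℕ) :
    ((∑ f : Sym2 V → Fin (q + 1), Y m f : ℕ) : ℝ)
      ≤ 2 ^ Fintype.card V * (q / (q + 1 : ℝ)) ^ (m.choose 2)
        * Fintype.card (Sym2 V → Fin (q + 1)) := by
  set N : ℝ := (Fintype.card (Sym2 V → Fin (q + 1)) : ℝ) with hN
  have hswap : ∑ f : Sym2 V → Fin (q + 1), Y m f = ∑ S ∈ powersetCard m (univ : Finset V),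
      (univ.filter (fun f : Sym2 V → Fin (q + 1) => Ind f S)).card := by
    unfold Y
    simp only [Finset.card_filter]
    rw [Finset.sum_comm]
  rw [hswap]
  push_cast
  calc _ = ∑ S ∈ powersetCard m (univ : Finset V), (q / (q + 1 : ℝ)) ^ (m.choose 2) * N := by
        refine Finset.sum_congr rfl fun S hS => ?_
        have := count_fun (A := Fin (q + 1)) (S.offDiag.image Sym2.mk.uncurry) {0}ᶜ
        rw [Sym2.card_image_offDiag, (Finset.mem_powersetCard.1 hS).2] at this
        simp only [card_compl, card_singleton, Fintype.card_fin, Nat.add_sub_cancel] at this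
        push_cast at this
        rw [← hN] at this
        rw [← this]
        congr 2
        ext f
        rw [mem_filter, mem_filter]
        simp only [mem_univ, true_and, Ind, mem_image, mem_offDiag, mem_compl,
          mem_singleton]
        constructor
        · rintro h e ⟨⟨a, b⟩, ⟨ha, hb, hab⟩, rfl⟩
          exact h a ha b hb hab
        · intro h a ha b hb hab
          exact h _ ⟨⟨a, b⟩, ⟨ha, hb, hab⟩, rfl⟩
    _ ≤ _ := by
        rw [Finset.sum_const, nsmul_eq_mul, ← mul_assoc]
        gcongr
        rw [card_powersetCard, Finset.card_univ]
        exact_mod_cast Nat.choose_le_two_pow _ _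

open Classical in
lemma exists_good (k : ℕ) (hk : 2 ≤ k) : ∃ (q m : ℕ), 1 ≤ k * m ∧
    ∀ (V : Type) [Fintype V] (x : V), Fintype.card V = 2 * (k * m) →
    ∃ f : Sym2 V → Fin (q + 1), X k x f < k * m ∧ Y m f = 0 := by
  obtain ⟨D, hD⟩ : ∃ D, D = 32 * k ^ 2 := ⟨_, rfl⟩
  obtain ⟨q, hq⟩ : ∃ q, q = 2 * D ^ k := ⟨_, rfl⟩
  obtain ⟨m, hm⟩ : ∃ m, m = (q + 1) * (16 * k) := ⟨_, rfl⟩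
  have hD1 : 1 ≤ D := by rw [hD]; nlinarith
  have hm1 : 1 ≤ m := by rw [hm]; nlinarith
  have hkm : 1 ≤ k * m := by nlinarith
  have hn : 2 * (k * m) = (q + 1) * D := by rw [hm, hD]; ring
  refine ⟨q, m, hkm, ?_⟩
  intro V _ x hV
  let F := Sym2 V → Fin (q + 1)
  set N : ℝ := (Fintype.card F : ℝ) with hN
  have hNpos : 0 < N := by
    rw [hN]; exact_mod_cast Fintype.card_pos
  have hX := sum_X (q := q) k D hD1 x (hV.trans hn)
  have hY := sum_Y (V := V) (q := q) m
  change _ ≤ _ * N at hX hY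
  rw [hV] at hY
  have hkmR : (0 : ℝ) < k * m := by exact_mod_cast hkm
  -- first estimate
  have e1 : (k * D ^ k : ℝ) / (k * m) < 1 / 2 := by
    rw [div_lt_iff₀ hkmR]
    have : 2 * D ^ k < m := by rw [hm, ← hq]; nlinarith
    have h2 : (2 * D ^ k : ℝ) < m := by exact_mod_cast this
    have hk0 : (0 : ℝ) < k := by exact_mod_cast (by omega : 0 < k)
    nlinarith
  -- second estimate
  have e2 : (2 : ℝ) ^ (2 * (k * m)) * (q / (q + 1 : ℝ)) ^ (m.choose 2) ≤ 1 / 2 := by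
    have hq0 : (0 : ℝ) < q + 1 := by positivity
    have a1 : (q / (q + 1 : ℝ)) ≤ Real.exp (-(1 / (q + 1 : ℝ))) := by
      have := Real.add_one_le_exp (-(1 / (q + 1 : ℝ)))
      refine le_trans (le_of_eq ?_) this
      field_simp
      ring
    have a2 : (2 : ℝ) ≤ Real.exp 1 := by
      have := Real.add_one_le_exp (1 : ℝ); linarith
    have a3 : (m.choose 2 : ℝ) = m * (m - 1) / 2 := Nat.cast_choose_two ℝ m
    have hmR : (m : ℝ) = (q + 1) * (16 * k) := by rw [hm]; push_cast; ring
    have hm2 : (2 : ℝ) ≤ m := by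
      have : 2 ≤ m := by rw [hm]; nlinarith
      exact_mod_cast this
    have a4 : (m.choose 2 : ℝ) * (1 / (q + 1 : ℝ)) ≥ 4 * (k * m) := by
      rw [a3, ge_iff_le, mul_one_div, le_div_iff₀ hq0]
      nlinarith
    have hkm1 : (1 : ℝ) ≤ k * m := by exact_mod_cast hkm
    calc _ ≤ Real.exp 1 ^ (2 * (k * m)) * Real.exp (-(1 / (q + 1 : ℝ))) ^ (m.choose 2) := by
          gcongr
      _ = Real.exp (2 * (k * m) - (m.choose 2 : ℝ) * (1 / (q + 1 : ℝ))) := by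
          rw [← Real.exp_nat_mul, ← Real.exp_nat_mul, ← Real.exp_add]
          congr 1
          push_cast
          ring
      _ ≤ Real.exp (-1) := by
          apply Real.exp_le_exp.2
          linarith
      _ ≤ 1 / 2 := by
          rw [Real.exp_neg, one_div]
          exact inv_anti₀ (by norm_num) a2
  have hsum : ∑ f : F, ((X k x f : ℝ) / (k * m) + Y m f) < ∑ f : F, (1 : ℝ) := by
    rw [Finset.sum_add_distrib, ← Finset.sum_div]
    push_cast at hX hY
    have h1 : (∑ f : F, (X k x f : ℝ)) / (k * m) ≤ (k * D ^ k : ℝ) / (k * m) * N := by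
      rw [div_mul_eq_mul_div]
      gcongr
    have h2 := mul_lt_mul_of_pos_right e1 hNpos
    have h3 := mul_le_mul_of_nonneg_right e2 hNpos.le
    have h4 : ∑ f : F, (1 : ℝ) = N := by simp [hN]
    rw [h4]
    linarith
  obtain ⟨f, -, hf⟩ := Finset.exists_lt_of_sum_lt hsum
  refine ⟨f, ?_, ?_⟩
  · have : (X k x f : ℝ) / (k * m) < 1 := by
      have : (0 : ℝ) ≤ Y m f := by positivity
      linarith
    rw [div_lt_one hkmR] at this
    exact_mod_cast this
  · have : (Y m f : ℝ) < 1 := by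
      have : (0 : ℝ) ≤ (X k x f : ℝ) / (k * m) := by positivity
      linarith
    have : Y m f < 1 := by exact_mod_cast this
    omega

open Classical in
lemma main (k : ℕ) (hk : 2 ≤ k) :
    ∃ (V : Type) (_ : Fintype V) (G : SimpleGraph V),
      (k : ℕ∞) < G.chromaticNumber ∧ (k : ℕ∞) < G.girth := by
  obtain ⟨q, m, hkm, hex⟩ := exists_good k hk
  obtain ⟨n, hn⟩ : ∃ n, n = 2 * (k * m) := ⟨_, rfl⟩
  have x : Fin n := ⟨0, by omega⟩
  obtain ⟨f, hX, hY⟩ := hex (Fin n) x (by simpa using hn)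
  let B : Finset (Fin n) := (Icc 1 k).biUnion fun l =>
    (univ.filter (fun L : List.Vector (Fin n) l => Bad x f L.toList)).image (fun L => L.toList.getLastD x)
  have hB : B.card < k * m := by
    refine lt_of_le_of_lt ?_ hX
    exact card_biUnion_le.trans (Finset.sum_le_sum fun l _ => card_image_le)
  let G : SimpleGraph (Fin n) := SimpleGraph.fromEdgeSet {e | f e = 0}
  have hcol : ¬ (G.induce {v | v ∉ B}).Colorable k := by
    rintro ⟨c⟩
    have hcard : Fintype.card (Fin k) * m < Fintype.card {v | v ∉ B} := by
      have : Fintype.card {v | v ∉ B} = n - B.card := by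
        have h := Finset.card_compl B
        rw [Fintype.card_fin] at h
        rw [← h, ← Fintype.card_coe]
        exact Fintype.card_congr (Equiv.subtypeEquivRight (by simp))
      rw [this, Fintype.card_fin]
      omega
    obtain ⟨i, hi⟩ := Fintype.exists_lt_card_fiber_of_mul_lt_card c hcard
    obtain ⟨S, hS, hSm⟩ := Finset.exists_subset_card_eq hi.le
    have : S.map (Function.Embedding.subtype _) ∈
        ((powersetCard m univ).filter (fun S : Finset (Fin n) => Ind f S)) := by
      simp only [mem_filter, mem_powersetCard, subset_univ, true_and, card_map]
      refine ⟨hSm, ?_⟩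
      intro a' ha' b' hb' hne h0
      obtain ⟨a, ha, rfl⟩ := mem_map.1 ha'
      obtain ⟨b, hb, rfl⟩ := mem_map.1 hb'
      have hadj : (G.induce {v | v ∉ B}).Adj a b := by
        simp only [SimpleGraph.comap_adj, G, SimpleGraph.fromEdgeSet_adj]
        exact ⟨h0, hne⟩
      have h1 := (mem_filter.1 (hS ha)).2
      have h2 := (mem_filter.1 (hS hb)).2
      exact c.valid hadj (h1.trans h2.symm)
    rw [Y, card_eq_zero] at hY
    exact Finset.notMem_empty _ (hY ▸ this)
  refine ⟨_, inferInstance, G.induce {v | v ∉ B}, ?_, ?_⟩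
  · rw [← not_le, SimpleGraph.chromaticNumber_le_iff_colorable]
    exact hcol
  · have hac : ¬ (G.induce {v | v ∉ B}).IsAcyclic := fun h => hcol (h.colorable_two.mono hk)
    obtain ⟨a, w, hw, hlen⟩ := SimpleGraph.exists_girth_eq_length.2 hac
    rw [hlen]
    by_contra hle
    rw [not_lt, Nat.cast_le] at hle
    let φ := (SimpleGraph.Embedding.induce (G := G) {v | v ∉ B}).toHom
    have hw' : (w.map φ).IsCycle :=
      hw.map (SimpleGraph.Embedding.induce (G := G) {v | v ∉ B}).injective
    have h3 := hw.three_le_length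
    apply a.2
    have hlast := walk_last (w.map φ) x (by simp; omega)
    have hedge := walk_edges (w.map φ)
    refine mem_biUnion.2 ⟨w.length, mem_Icc.2 ⟨by omega, hle⟩, mem_image.2
      ⟨⟨(w.map φ).support.tail, by simp⟩, ?_, hlast⟩⟩
    refine mem_filter.2 ⟨mem_univ _, ?_⟩
    change Bad x f (w.map φ).support.tail
    unfold Bad
    rw [hlast, ← hedge]
    refine ⟨hw'.edges_nodup, fun e he => ?_⟩
    have := (w.map φ).edges_subset_edgeSet he
    simp only [G, SimpleGraph.edgeSet_fromEdgeSet] at this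
    exact this.1

end ErdosGirth

/-- **Erdős.** For every `k` there is a finite simple graph whose chromatic number and girth
are both strictly greater than `k`. -/
theorem erdos_high_chromatic_high_girth (k : ℕ) :
    ∃ (V : Type) (_ : Fintype V) (G : SimpleGraph V),
      (k : ℕ∞) < G.chromaticNumber ∧ (k : ℕ∞) < G.girth := by
  obtain ⟨V, i, G, h1, h2⟩ := ErdosGirth.main (max k 2) (le_max_right _ _)
  have h : (k : ℕ∞) ≤ (max k 2 : ℕ) := by exact_mod_cast le_max_left _ _
  exact ⟨V, i, G, h.trans_lt h1, h.trans_lt h2⟩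
end

section
/- (Condition (J4)_n for the Maddux algebra E_k(2,3).) Let n > 2 and let l, k be natural numbers with l ≥ 2n−1 and k ≥ (2n−1)l. Let I be a set of cardinality k. Then for all subsets V₂, …, V_n, W₂, …, W_n of I, each of cardinality l, there exists T ⊆ I with |T| = l such that for every i with 2 ≤ i ≤ n and all a ∈ V_i, b ∈ W_i, c ∈ T one has a ≤ b;c in E_k(2,3), i.e. ¬(a = b ∧ b = c). -/
/-- **Condition (J4)ₙ for the Maddux algebra `E_k(2,3)`.** In `E_k(2,3)` all triangles of
non-identity atoms are allowed except the monochromatic ones, so for non-identity atoms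
`a ≤ b;c` iff `¬(a = b ∧ b = c)`.  If `n > 2`, `l ≥ 2n−1` and `k ≥ (2n−1)l`, and `I` is the
set of the `k` non-identity atoms, then for all `l`-element subsets `V₂,…,Vₙ,W₂,…,Wₙ` of `I`
there is an `l`-element subset `T` of `I` such that `a ≤ b;c` whenever `2 ≤ i ≤ n`,
`a ∈ Vᵢ`, `b ∈ Wᵢ` and `c ∈ T`. -/
theorem maddux_J4 (n l k : ℕ) (hn : 2 < n) (hl : 2 * n - 1 ≤ l) (hk : (2 * n - 1) * l ≤ k)
    (I : Type*) [Fintype I] (hI : Fintype.card I = k)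
    (V W : ℕ → Finset I)
    (hV : ∀ i, 2 ≤ i → i ≤ n → (V i).card = l)
    (hW : ∀ i, 2 ≤ i → i ≤ n → (W i).card = l) :
    ∃ T : Finset I, T.card = l ∧
      ∀ i, 2 ≤ i → i ≤ n → ∀ a ∈ V i, ∀ b ∈ W i, ∀ c ∈ T, ¬(a = b ∧ b = c) := by
  classical
  have hU : ((Finset.Icc 2 n).biUnion V).card ≤ (Finset.Icc 2 n).card * l :=
    Finset.card_biUnion_le_card_mul _ _ _ fun i hi => by
      rw [Finset.mem_Icc] at hi
      exact (hV i hi.1 hi.2).le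
  have hc := Finset.card_add_card_compl ((Finset.Icc 2 n).biUnion V)
  have h : l ≤ ((Finset.Icc 2 n).biUnion V)ᶜ.card := by
    rw [Nat.card_Icc] at hU
    have h1 : (n + 1 - 2) * l + l ≤ (2 * n - 1) * l := by
      rw [← Nat.succ_mul]
      exact Nat.mul_le_mul_right _ (by omega)
    omega
  obtain ⟨T, hT, hTl⟩ := Finset.exists_subset_card_eq h
  refine ⟨T, hTl, ?_⟩
  rintro i h2 hin a ha b _ c hcT ⟨rfl, rfl⟩
  have := hT hcT
  rw [Finset.mem_compl] at this
  exact this (Finset.mem_biUnion.2 ⟨i, Finset.mem_Icc.2 ⟨h2, hin⟩, ha⟩)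
end

section
/- Let n ≥ 2, let U be a set, and let B be a field of subsets of U that is atomless as a Boolean algebra and separates points. Let A be the collection of all finite unions of rectangles X₁ × ⋯ × X_n with each X_i ∈ B. Then: (i) A is a field of subsets of ⁿU (closed under finite unions, intersections and complementation, containing ∅ and ⁿU); (ii) the family S = { X × (U∖X) × U × ⋯ × U : X ∈ B } has least upper bound ⁿU in the Boolean algebra A (every W ∈ A containing every member of S equals ⁿU); (iii) defining s₀¹(Z) = { s ∈ ⁿU : (s₁, s₁, s₂, …, s_{n−1}) ∈ Z }, one has s₀¹(W) = ∅ for every W ∈ S, while s₀¹(ⁿU) = ⁿU. Consequently the substitution operation s₀¹ on A is not completely additive: s₀¹(sup S) = ⁿU ≠ ∅ = sup { s₀¹(W) : W ∈ S }. -/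
/-- A field of subsets of `U`: contains `∅` and `U` and is closed under finite unions,
finite intersections and complementation. -/
def IsFieldOfSets {U : Type*} (B : Set (Set U)) : Prop :=
  ∅ ∈ B ∧ Set.univ ∈ B ∧ (∀ X ∈ B, ∀ Y ∈ B, X ∪ Y ∈ B) ∧
    (∀ X ∈ B, ∀ Y ∈ B, X ∩ Y ∈ B) ∧ (∀ X ∈ B, Xᶜ ∈ B)

/-- The collection of finite unions of rectangles `X₁ × ⋯ × Xₙ` with all sides in `B`. -/
def rectUnions {U : Type*} (B : Set (Set U)) (n : ℕ) : Set (Set (Fin n → U)) :=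
  {W | ∃ (m : ℕ) (X : Fin m → Fin n → Set U),
    (∀ j i, X j i ∈ B) ∧ W = ⋃ j, {s | ∀ i, s i ∈ X j i}}

/-- The family `S = { X × (U∖X) × U × ⋯ × U : X ∈ B }`. -/
def stripes {U : Type*} (B : Set (Set U)) (n : ℕ) (hn : 2 ≤ n) : Set (Set (Fin n → U)) :=
  {W | ∃ X ∈ B, W = {s : Fin n → U | s ⟨0, by omega⟩ ∈ X ∧ s ⟨1, by omega⟩ ∉ X}}

/-- The diagonal-free substitution `s₀¹`, replacing the 0th coordinate by the 1st:
`s₀¹(Z) = { s : (s₁, s₁, s₂, …, s_{n−1}) ∈ Z }`. -/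
def sub01 {U : Type*} (n : ℕ) (hn : 2 ≤ n) (Z : Set (Fin n → U)) : Set (Fin n → U) :=
  {s | Function.update s ⟨0, by omega⟩ (s ⟨1, by omega⟩) ∈ Z}

theorem rectUnions_mk {U : Type*} {B : Set (Set U)} {n : ℕ} {ι : Type} [Finite ι]
    (X : ι → Fin n → Set U) (hX : ∀ j i, X j i ∈ B) :
    (⋃ j, {s : Fin n → U | ∀ i, s i ∈ X j i}) ∈ rectUnions B n := by
  obtain ⟨m, ⟨e⟩⟩ := Finite.exists_equiv_fin ι
  refine ⟨m, fun j => X (e.symm j), fun j i => hX _ _, ?_⟩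
  exact (e.symm.surjective.iUnion_comp (fun j => {s : Fin n → U | ∀ i, s i ∈ X j i})).symm

theorem rectUnions_univ {U : Type*} {B : Set (Set U)} {n : ℕ} (hB : IsFieldOfSets B) :
    Set.univ ∈ rectUnions B n := by
  have h := rectUnions_mk (B := B) (n := n) (ι := Unit) (fun _ _ => Set.univ)
    (fun _ _ => hB.2.1)
  convert h using 1
  ext s
  simp

theorem rectUnions_inter {U : Type*} {B : Set (Set U)} {n : ℕ} (hB : IsFieldOfSets B)
    (V : Set (Fin n → U)) (hV : V ∈ rectUnions B n) (W : Set (Fin n → U))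
    (hW : W ∈ rectUnions B n) : V ∩ W ∈ rectUnions B n := by
  obtain ⟨a, X, hX, rfl⟩ := hV
  obtain ⟨b, Y, hY, rfl⟩ := hW
  have h := rectUnions_mk (B := B) (n := n) (ι := Fin a × Fin b)
    (fun j i => X j.1 i ∩ Y j.2 i) (fun j i => hB.2.2.2.1 _ (hX _ _) _ (hY _ _))
  convert h using 1
  ext s
  simp [forall_and]

theorem rectUnions_union {U : Type*} {B : Set (Set U)} {n : ℕ}
    (V : Set (Fin n → U)) (hV : V ∈ rectUnions B n) (W : Set (Fin n → U))
    (hW : W ∈ rectUnions B n) : V ∪ W ∈ rectUnions B n := by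
  obtain ⟨a, X, hX, rfl⟩ := hV
  obtain ⟨b, Y, hY, rfl⟩ := hW
  have h := rectUnions_mk (B := B) (n := n) (ι := Fin a ⊕ Fin b)
    (fun j => Sum.elim X Y j) (by rintro (j | j) i <;> simp [hX, hY])
  convert h using 1
  ext s
  simp

theorem rectUnions_compl {U : Type*} {B : Set (Set U)} {n : ℕ} (hB : IsFieldOfSets B)
    (W : Set (Fin n → U)) (hW : W ∈ rectUnions B n) : Wᶜ ∈ rectUnions B n := by
  obtain ⟨m, X, hX, rfl⟩ := hW
  induction m with
  | zero => simpa using rectUnions_univ hB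
  | succ m ih =>
    have h1 := ih (fun j => X j.succ) (fun j i => hX _ _)
    have h2 := rectUnions_mk (B := B) (n := n) (ι := Fin n)
      (fun k i => if i = k then (X 0 i)ᶜ else Set.univ) (by
        intro k i
        split_ifs
        · exact hB.2.2.2.2 _ (hX _ _)
        · exact hB.2.1)
    convert rectUnions_inter hB _ h2 _ h1 using 1
    ext s
    simp only [Set.mem_compl_iff, Set.mem_iUnion, Set.mem_ofPred_eq, Set.mem_inter_iff,
      Fin.exists_fin_succ, not_or]
    refine and_congr_left fun _ => ?_
    rw [not_forall]
    refine exists_congr fun k => ⟨fun h i => ?_, fun h => ?_⟩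
    · split_ifs with hi
      · subst hi; exact h
      · trivial
    · simpa using h k

/-- The AGNS example witnessing failure of complete additivity of `s₀¹` (and of the omitting
types theorem for `Df_n`): for an atomless point-separating field `B` of subsets of `U` and
`n ≥ 2`, the finite unions of `B`-rectangles form a field of subsets `A` of `ⁿU`; the family
`S` of sets `X × (U∖X) × U × ⋯ × U` lies in `A` and has least upper bound `ⁿU` in `A`; and
`s₀¹(W) = ∅` for every `W ∈ S` while `s₀¹(ⁿU) = ⁿU ≠ ∅`, so `s₀¹` is not completely
additive on `A`. -/
theorem rectangle_algebra_not_completely_additive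
    (n : ℕ) (hn : 2 ≤ n) (U : Type u) [Nonempty U] (B : Set (Set U))
    (hB : IsFieldOfSets B)
    (hatomless : ∀ X ∈ B, X.Nonempty → ∃ Y ∈ B, Y.Nonempty ∧ Y ⊂ X)
    (hsep : ∀ u v : U, u ≠ v → ∃ X ∈ B, u ∈ X ∧ v ∉ X) :
    -- (i) `A` is a field of subsets of `ⁿU`
    IsFieldOfSets (rectUnions B n) ∧
    -- (ii) `S ⊆ A` and the least upper bound of `S` in `A` is `ⁿU`
    stripes B n hn ⊆ rectUnions B n ∧
    (∀ W ∈ rectUnions B n, (∀ Z ∈ stripes B n hn, Z ⊆ W) → W = Set.univ) ∧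
    -- (iii) `s₀¹` kills every member of `S` but fixes `ⁿU`
    (∀ W ∈ stripes B n hn, sub01 n hn W = ∅) ∧
    sub01 n hn (Set.univ : Set (Fin n → U)) = Set.univ ∧
    (Set.univ : Set (Fin n → U)) ≠ ∅ := by
  have hsub : stripes B n hn ⊆ rectUnions B n := by
    rintro W ⟨X, hX, rfl⟩
    have h := rectUnions_mk (B := B) (n := n) (ι := Unit)
      (fun _ i => if i = ⟨0, by omega⟩ then X else if i = ⟨1, by omega⟩ then Xᶜ else Set.univ) (by
        intro k i
        split_ifs
        · exact hX
        · exact hB.2.2.2.2 _ hX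
        · exact hB.2.1)
    convert h using 1
    ext s
    simp only [Set.mem_iUnion, Set.mem_ofPred_eq, exists_const]
    constructor
    · rintro ⟨h0, h1⟩ i
      split_ifs with h h'
      · subst h; exact h0
      · subst h'; exact h1
      · trivial
    · intro h
      refine ⟨by simpa using h ⟨0, by omega⟩, by simpa [Fin.ext_iff] using h ⟨1, by omega⟩⟩
  refine ⟨⟨?_, rectUnions_univ hB, rectUnions_union, rectUnions_inter hB,
    rectUnions_compl hB⟩, hsub, ?_, ?_, ?_, ?_⟩
  · simpa using rectUnions_compl hB _ (rectUnions_univ hB (n := n))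
  · intro W hW hS
    have hd : ∀ s : Fin n → U, s ⟨0, by omega⟩ ≠ s ⟨1, by omega⟩ → s ∈ W := by
      intro s hs
      obtain ⟨X, hX, h0, h1⟩ := hsep _ _ hs
      exact hS _ ⟨X, hX, rfl⟩ ⟨h0, h1⟩
    by_contra hne
    obtain ⟨s, hs⟩ := (Set.ne_univ_iff_exists_notMem W).1 hne
    obtain ⟨m, X, hX, hc⟩ := rectUnions_compl hB W hW
    have hs' : s ∈ Wᶜ := hs
    rw [hc] at hs'
    obtain ⟨j, hj⟩ := Set.mem_iUnion.1 hs'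
    have hj : ∀ i, s i ∈ X j i := hj
    obtain ⟨Y, -, ⟨y, hy⟩, hYX⟩ := hatomless (X j ⟨0, by omega⟩) (hX _ _) ⟨_, hj _⟩
    obtain ⟨z, hz, hzY⟩ := Set.exists_of_ssubset hYX
    have hv : ∃ v ∈ X j ⟨0, by omega⟩, v ≠ s ⟨1, by omega⟩ := by
      by_cases h : y = s ⟨1, by omega⟩
      · refine ⟨z, hz, fun h' => hzY ?_⟩
        rw [h', ← h]
        exact hy
      · exact ⟨y, hYX.1 hy, h⟩
    obtain ⟨v, hvX, hv⟩ := hv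
    have hin : Function.update s ⟨0, by omega⟩ v ∈ Wᶜ := by
      rw [hc]
      refine Set.mem_iUnion.2 ⟨j, fun i => ?_⟩
      by_cases h : i = ⟨0, by omega⟩
      · subst h; simpa using hvX
      · rw [Function.update_of_ne h]; exact hj i
    exact hin (hd _ (by simpa using hv))
  · rintro W ⟨X, hX, rfl⟩
    ext s
    simp [sub01]
  · rfl
  · exact Set.univ_nonempty.ne_empty
end

section
/- Let α ≥ 2 be an ordinal, U an infinite set, p ∈ ᵅU, and let V = { s ∈ ᵅU : { i < α : s(i) ≠ p(i) } is finite } be the corresponding weak space. Let κ be an infinite cardinal, fix i* ∈ κ and set J = κ ∖ {i*}. Suppose (Q_n)_{n<κ} is a partition of V into nonempty sets with Q_{i*} = { s ∈ V : s(0) = s(1) }. Let F be a nonprincipal ultrafilter on J, and for X ⊆ J define R_X = ⋃{ Q_k : k ∈ X } if X ∉ F and R_X = ⋃{ Q_k : k ∈ X ∪ {i*} } if X ∈ F. Let A = { R_X : X ⊆ J }. Then: (i) A is a field of subsets of V (in particular V ∖ R_X = R_{J∖X}, R_X ∪ R_Y = R_{X∪Y}, R_X ∩ R_Y = R_{X∩Y});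 (ii) A is atomic, and its atoms are exactly the sets Q_k = R_{{k}} for k ∈ J; (iii) the least upper bound in A of the set of atoms { Q_k : k ∈ J } is V; (iv) defining s₀¹(Z) = { s ∈ V : s⁰₁ ∈ Z }, where s⁰₁ agrees with s except that s⁰₁(0) = s(1), the family A is closed under s₀¹ (indeed s₀¹(R_X) = V if X ∈ F and s₀¹(R_X) = ∅ if X ∉ F), s₀¹(Q_k) = ∅ for every k ∈ J, and s₀¹(V) = V. Consequently s₀¹ is not completely additive on A: s₀¹ of the supremum of the atoms is V, while the supremum of the s₀¹-images of the atoms is ∅. -/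
open Set

/-- The weak space `ᵅU^{(p)}`: functions from (the ordinals below) `α` to `U` that differ
from `p` in only finitely many coordinates. -/
def weakSpace (α : Ordinal.{0}) (U : Type*) (p : {i : Ordinal.{0} // i < α} → U) :
    Set ({i : Ordinal.{0} // i < α} → U) :=
  {s | {i | s i ≠ p i}.Finite}

open Classical in
/-- The element `R_X` of the algebra: `⋃{ Q_k : k ∈ X }` if `X ∉ F`, and
`⋃{ Q_k : k ∈ X ∪ {i*} }` if `X ∈ F` (here the distinguished index `i*` is `none` and the
remaining indices `J` make up the type `J`). -/
noncomputable def Rfam {J W : Type*} (Q : Option J → Set W) (F : Ultrafilter J)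
    (X : Set J) : Set W :=
  (⋃ k ∈ X, Q (some k)) ∪ (if X ∈ F then Q none else ∅)

open Classical in
/-- The substitution `s₀¹` relativized to the unit `V`:
`s₀¹(Z) = { s ∈ V : s⁰₁ ∈ Z }` where `s⁰₁` agrees with `s` except `s⁰₁(0) = s(1)`. -/
noncomputable def substW {ι U : Type*} (i0 i1 : ι) (V : Set (ι → U)) (Z : Set (ι → U)) : Set (ι → U) :=
  {s | s ∈ V ∧ Function.update s i0 (s i1) ∈ Z}

/-- The weak-space construction of an atomic set algebra (in the cylindrifier-free reduct
class `SA`) on which `s₀¹` is not completely additive, hence with no complete representation.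
Here the index set `κ` is represented as `Option J` (`i* = none`, `J = κ ∖ {i*}`). -/
theorem weak_space_atomic_not_completely_additive
    (α : Ordinal.{0}) (hα : 2 ≤ α) (h0 : (0 : Ordinal.{0}) < α) (h1 : (1 : Ordinal.{0}) < α)
    (U : Type) [Infinite U] (p : {i : Ordinal.{0} // i < α} → U)
    (κ : Cardinal.{0}) (hκ : Cardinal.aleph0 ≤ κ)
    (J : Type) (hJ : Cardinal.mk J = κ)
    (Q : Option J → Set ({i : Ordinal.{0} // i < α} → U))
    (hQne : ∀ k, (Q k).Nonempty)
    (hQdisj : ∀ k l : Option J, k ≠ l → Q k ∩ Q l = ∅)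
    (hQunion : ⋃ k, Q k = weakSpace α U p)
    (hQid : Q none = {s ∈ weakSpace α U p | s ⟨0, h0⟩ = s ⟨1, h1⟩})
    (F : Ultrafilter J) (hF : ∀ j : J, {j} ∉ F) :
    -- (i) the `R_X` form a field of subsets of the weak space `V`
    ((∀ X : Set J, weakSpace α U p \ Rfam Q F X = Rfam Q F Xᶜ) ∧
     (∀ X Y : Set J, Rfam Q F (X ∪ Y) = Rfam Q F X ∪ Rfam Q F Y) ∧
     (∀ X Y : Set J, Rfam Q F (X ∩ Y) = Rfam Q F X ∩ Rfam Q F Y) ∧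
     Rfam Q F Set.univ = weakSpace α U p ∧ Rfam Q F ∅ = ∅) ∧
    -- (ii) the algebra is atomic with atoms exactly the `Q_k = R_{{k}}`, `k ∈ J`
    ((∀ k : J, Rfam Q F {k} = Q (some k)) ∧
     (∀ (k : J) (X : Set J), Rfam Q F X ⊆ Rfam Q F {k} →
        Rfam Q F X = ∅ ∨ Rfam Q F X = Rfam Q F {k}) ∧
     (∀ X : Set J, (Rfam Q F X).Nonempty → ∃ k : J, Rfam Q F {k} ⊆ Rfam Q F X)) ∧
    -- (iii) the least upper bound of the atoms is `V`
    ((∀ k : J, Q (some k) ⊆ weakSpace α U p) ∧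
     (∀ X : Set J, (∀ k : J, Q (some k) ⊆ Rfam Q F X) → Rfam Q F X = weakSpace α U p)) ∧
    -- (iv) `s₀¹` behaviour: closure, and complete additivity fails
    ((∀ X : Set J, X ∈ F →
        substW ⟨0, h0⟩ ⟨1, h1⟩ (weakSpace α U p) (Rfam Q F X) = weakSpace α U p) ∧
     (∀ X : Set J, X ∉ F → substW ⟨0, h0⟩ ⟨1, h1⟩ (weakSpace α U p) (Rfam Q F X) = ∅) ∧
     (∀ k : J, substW ⟨0, h0⟩ ⟨1, h1⟩ (weakSpace α U p) (Q (some k)) = ∅) ∧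
     substW ⟨0, h0⟩ ⟨1, h1⟩ (weakSpace α U p) (weakSpace α U p) = weakSpace α U p ∧
     weakSpace α U p ≠ ∅) := by
  classical
  have hV : ∀ s, s ∈ weakSpace α U p ↔ ∃ k, s ∈ Q k := by
    intro s; rw [← hQunion]; simp
  have huniq : ∀ s k l, s ∈ Q k → s ∈ Q l → k = l := by
    intro s k l hk hl
    by_contra h
    have h2 : s ∈ Q k ∩ Q l := ⟨hk, hl⟩
    rw [hQdisj k l h] at h2
    exact h2
  have hsome : ∀ s k, s ∈ Q (some k) → ∀ X, (s ∈ Rfam Q F X ↔ k ∈ X) := by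
    intro s k hs X
    unfold Rfam
    constructor
    · rintro (h | h)
      · simp only [mem_iUnion] at h
        obtain ⟨l, hl, hl2⟩ := h
        have := huniq s _ _ hs hl2
        cases this
        exact hl
      · split_ifs at h with hX
        · exact absurd (huniq s _ _ hs h) (by simp)
        · exact absurd h (by simp)
    · intro h
      left
      simp only [mem_iUnion]
      exact ⟨k, h, hs⟩
  have hnone : ∀ s, s ∈ Q none → ∀ X, (s ∈ Rfam Q F X ↔ X ∈ F) := by
    intro s hs X
    unfold Rfam
    constructor
    · rintro (h | h)
      · simp only [mem_iUnion] at h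
        obtain ⟨l, hl, hl2⟩ := h
        exact absurd (huniq s _ _ hs hl2) (by simp)
      · split_ifs at h with hX
        · exact hX
        · exact absurd h (by simp)
    · intro h
      right
      rw [if_pos h]
      exact hs
  have hsub : ∀ X, Rfam Q F X ⊆ weakSpace α U p := by
    intro X s hs
    rw [hV]
    unfold Rfam at hs
    rcases hs with h | h
    · simp only [mem_iUnion] at h
      obtain ⟨l, hl, hl2⟩ := h
      exact ⟨_, hl2⟩
    · split_ifs at h with hX
      · exact ⟨_, h⟩
      · exact absurd h (by simp)
  -- extensionality over the weak space
  have hext : ∀ A B : Set ({i : Ordinal.{0} // i < α} → U), A ⊆ weakSpace α U p →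
      B ⊆ weakSpace α U p → (∀ s ∈ Q none, (s ∈ A ↔ s ∈ B)) →
      (∀ k, ∀ s ∈ Q (some k), (s ∈ A ↔ s ∈ B)) → A = B := by
    intro A B hA hB hn hs
    have key : ∀ s ∈ weakSpace α U p, (s ∈ A ↔ s ∈ B) := by
      intro s h
      obtain ⟨k, hk⟩ := (hV s).1 h
      cases k with
      | none => exact hn s hk
      | some k => exact hs k s hk
    ext s
    exact ⟨fun h => (key s (hA h)).1 h, fun h => (key s (hB h)).2 h⟩
  have hQV : ∀ k, Q k ⊆ weakSpace α U p := fun k s hs => (hV s).2 ⟨k, hs⟩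
  have hunivR : Rfam Q F Set.univ = weakSpace α U p := by
    refine hext _ _ (hsub _) Subset.rfl ?_ ?_
    · intro s hs
      rw [hnone s hs]
      exact ⟨fun _ => hQV _ hs, fun _ => Filter.univ_mem⟩
    · intro k s hs
      rw [hsome s k hs]
      exact ⟨fun _ => hQV _ hs, fun _ => mem_univ _⟩
  have hempty : Rfam Q F ∅ = ∅ := by
    refine hext _ _ (hsub _) (empty_subset _) ?_ ?_
    · intro s hs
      rw [hnone s hs]
      exact ⟨fun h => absurd h Ultrafilter.empty_notMem, fun h => absurd h (by simp)⟩
    · intro k s hs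
      rw [hsome s k hs]
      simp
  have hsing : ∀ k : J, Rfam Q F {k} = Q (some k) := by
    intro k
    refine hext _ _ (hsub _) (hQV _) ?_ ?_
    · intro s hs
      rw [hnone s hs]
      exact ⟨fun h => absurd h (hF k), fun h => absurd (huniq s _ _ hs h) (by simp)⟩
    · intro l s hs
      rw [hsome s l hs]
      constructor
      · intro h
        rw [mem_singleton_iff] at h
        rwa [← h]
      · intro h
        have := huniq s _ _ hs h
        simpa using this
  have hupd : ∀ s ∈ weakSpace α U p,
      Function.update s ⟨0, h0⟩ (s ⟨1, h1⟩) ∈ Q none := by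
    intro s hs
    rw [hQid]
    refine ⟨?_, ?_⟩
    · refine Set.Finite.subset (Set.Finite.union hs (Set.finite_singleton ⟨0, h0⟩)) ?_
      intro i hi
      by_cases h : i = ⟨0, h0⟩
      · right; exact h
      · left
        simpa [Function.update_of_ne h] using hi
    · rw [Function.update_self, Function.update_of_ne]
      intro h
      simp at h
  have hsubst : ∀ Z s, s ∈ substW ⟨0, h0⟩ ⟨1, h1⟩ (weakSpace α U p) Z ↔
      s ∈ weakSpace α U p ∧ Function.update s ⟨0, h0⟩ (s ⟨1, h1⟩) ∈ Z := by
    intro Z s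
    unfold substW
    rw [mem_setOf_eq]
    constructor <;> (rintro ⟨a, b⟩; refine ⟨a, ?_⟩; convert b)
  have hin : ∀ X : Set J, X ∈ F →
        substW ⟨0, h0⟩ ⟨1, h1⟩ (weakSpace α U p) (Rfam Q F X) = weakSpace α U p := by
    intro X hX
    ext s
    rw [hsubst]
    exact ⟨fun h => h.1, fun h => ⟨h, (hnone _ (hupd s h) X).2 hX⟩⟩
  have hout : ∀ X : Set J, X ∉ F →
      substW ⟨0, h0⟩ ⟨1, h1⟩ (weakSpace α U p) (Rfam Q F X) = ∅ := by
    intro X hX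
    refine eq_empty_of_forall_notMem fun s hs => ?_
    rw [hsubst] at hs
    exact hX ((hnone _ (hupd s hs.1) X).1 hs.2)
  refine ⟨⟨?_, ?_, ?_, hunivR, hempty⟩, ⟨hsing, ?_, ?_⟩, ⟨fun k => hQV _, ?_⟩,
    hin, hout, ?_, ?_, ?_⟩
  · intro X
    refine hext _ _ diff_subset (hsub _) ?_ ?_
    · intro s hs
      rw [mem_diff, hnone s hs, hnone s hs, Ultrafilter.compl_mem_iff_notMem]
      exact ⟨fun h => h.2, fun h => ⟨hQV _ hs, h⟩⟩
    · intro k s hs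
      rw [mem_diff, hsome s k hs, hsome s k hs]
      exact ⟨fun h => h.2, fun h => ⟨hQV _ hs, h⟩⟩
  · intro X Y
    refine hext _ _ (hsub _) (union_subset (hsub _) (hsub _)) ?_ ?_
    · intro s hs
      rw [mem_union, hnone s hs, hnone s hs, hnone s hs, Ultrafilter.union_mem_iff]
    · intro k s hs
      rw [mem_union, hsome s k hs, hsome s k hs, hsome s k hs, mem_union]
  · intro X Y
    refine hext _ _ (hsub _) (inter_subset_left.trans (hsub _)) ?_ ?_
    · intro s hs
      rw [mem_inter_iff, hnone s hs, hnone s hs, hnone s hs]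
      exact Filter.inter_mem_iff
    · intro k s hs
      rw [mem_inter_iff, hsome s k hs, hsome s k hs, hsome s k hs, mem_inter_iff]
  · intro k X h
    have hXk : X ⊆ {k} := by
      intro l hl
      obtain ⟨s, hs⟩ := hQne (some l)
      exact (hsome s l hs {k}).1 (h ((hsome s l hs X).2 hl))
    rcases subset_singleton_iff_eq.1 hXk with h | h
    · left; rw [h, hempty]
    · right; rw [h]
  · rintro X ⟨s, hs⟩
    have hXne : X.Nonempty := by
      by_contra hne
      rw [not_nonempty_iff_eq_empty] at hne
      rw [hne, hempty] at hs
      exact hs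
    obtain ⟨k, hk⟩ := hXne
    refine ⟨k, ?_⟩
    rw [hsing]
    exact fun t ht => (hsome t k ht X).2 hk
  · intro X h
    have : X = Set.univ := by
      refine eq_univ_of_forall fun k => ?_
      obtain ⟨s, hs⟩ := hQne (some k)
      exact (hsome s k hs X).1 (h k hs)
    rw [this, hunivR]
  · intro k
    rw [← hsing]
    exact hout _ (hF k)
  · have := hin Set.univ Filter.univ_mem
    rwa [hunivR] at this
  · obtain ⟨s, hs⟩ := hQne none
    exact Nonempty.ne_empty ⟨s, hQV _ hs⟩
end

section
/- Let κ be an infinite cardinal and let At = {1'} ∪ { a₀^i : i < 2^κ } ∪ { a_j : 1 ≤ j < κ } be a set of pairwise distinct 'atoms'. Call a function N : ω × ω → At a network if: N(x,x) = 1' for all x; N(x,y) = N(y,x) for all x,y; whenever N(x,y) = 1' one has N(x,z) = N(y,z) for all z; there is no triangle x,y,z and index j with 1 ≤ j < κ such that N(x,y) = N(y,z) = N(x,z) = a_j; and there is no triangle x,y,z with all three labels N(x,y), N(y,z), N(x,z) lying in { a₀^i : i < 2^κ }. Let S be the set of networks N such that { j : 1 ≤ j < κ and a_j occurs as a label of some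 edge of N } is finite. Then S is an amalgamation class: for all M, N ∈ S and all i, j < ω, if M(k,l) = N(k,l) for all k, l ∈ ω ∖ {i, j}, then there exists L ∈ S such that L(k,l) = M(k,l) whenever i ∉ {k,l} and L(k,l) = N(k,l) whenever j ∉ {k,l}. -/
/-- A network over the atom structure `At = {1'} ∪ {a₀^i : i ∈ A0} ∪ {a_j : j ∈ A1}`
(`1'` is `none`, `a₀^i` is `some (Sum.inl i)`, `a_j` is `some (Sum.inr j)`): labels are
reflexive-identity, symmetric, identity behaves as identity, and there are no monochromatic
triangles `(a_j, a_j, a_j)` and none with all three labels among the `a₀^i`. -/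
def IsNetwork {A0 A1 : Type*} (N : ℕ → ℕ → Option (A0 ⊕ A1)) : Prop :=
  (∀ x, N x x = none) ∧
  (∀ x y, N x y = N y x) ∧
  (∀ x y, N x y = none → ∀ z, N x z = N y z) ∧
  (¬ ∃ (x y z : ℕ) (j : A1), N x y = some (Sum.inr j) ∧ N y z = some (Sum.inr j) ∧
      N x z = some (Sum.inr j)) ∧
  (¬ ∃ x y z : ℕ, (∃ i : A0, N x y = some (Sum.inl i)) ∧ (∃ i : A0, N y z = some (Sum.inl i)) ∧
      (∃ i : A0, N x z = some (Sum.inl i)))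

/-- Membership in `S`: only finitely many of the atoms `a_j` (`j ∈ A1`) occur as labels. -/
def FinSupport {A0 A1 : Type*} (N : ℕ → ℕ → Option (A0 ⊕ A1)) : Prop :=
  {j : A1 | ∃ x y : ℕ, N x y = some (Sum.inr j)}.Finite

theorem net_pullback {A0 A1 : Type*} (N : ℕ → ℕ → Option (A0 ⊕ A1)) (f : ℕ → ℕ)
    (hN : IsNetwork N ∧ FinSupport N) :
    IsNetwork (fun x y => N (f x) (f y)) ∧ FinSupport (fun x y => N (f x) (f y)) := by
  obtain ⟨⟨h1, h2, h3, h4, h5⟩, h6⟩ := hN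
  refine ⟨⟨fun x => h1 _, fun x y => h2 _ _, fun x y h z => h3 _ _ h _, ?_, ?_⟩, ?_⟩
  · rintro ⟨x, y, z, m, h⟩
    exact h4 ⟨f x, f y, f z, m, h⟩
  · rintro ⟨x, y, z, h⟩
    exact h5 ⟨f x, f y, f z, h⟩
  · refine Set.Finite.subset h6 ?_
    rintro m ⟨x, y, h⟩
    exact ⟨f x, f y, h⟩

theorem net_case {A0 A1 : Type*} (M N : ℕ → ℕ → Option (A0 ⊕ A1))
    (hM : IsNetwork M) (hN : IsNetwork N ∧ FinSupport N)
    (i j k : ℕ) (hki : k ≠ i) (hkj : k ≠ j) (hij : i ≠ j) (hk : M j k = none)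
    (hMN : ∀ k l : ℕ, k ≠ i → k ≠ j → l ≠ i → l ≠ j → M k l = N k l) :
    ∃ L : ℕ → ℕ → Option (A0 ⊕ A1), (IsNetwork L ∧ FinSupport L) ∧
      (∀ k l : ℕ, k ≠ i → l ≠ i → L k l = M k l) ∧
      (∀ k l : ℕ, k ≠ j → l ≠ j → L k l = N k l) := by
  refine ⟨_, net_pullback N (fun x => if x = j then k else x) hN, ?_, ?_⟩
  · obtain ⟨h1, h2, h3, -, -⟩ := hM
    have e := h3 j k hk
    intro x y hx hy
    have e2 : ∀ z, M z j = M z k := fun z => by rw [h2 z j, h2 z k, e]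
    by_cases hxj : x = j <;> by_cases hyj : y = j <;> simp only [hxj, hyj, if_true, if_false]
    · rw [← hMN k k hki hkj hki hkj, h1, h1]
    · rw [← hMN k y hki hkj hy hyj, e]
    · rw [← hMN x k hx hxj hki hkj, e2]
    · rw [← hMN x y hx hxj hy hyj]
  · intro x y hx hy
    simp [hx, hy]

/-- **`S` is an amalgamation class.** With `κ` an infinite cardinal, `#A0 = 2^κ` indexing the
atoms `a₀^i` and `#A1 = κ` indexing the atoms `a_j`, if `M, N ∈ S` agree on all edges avoiding
the nodes `i` and `j` (`M ≡_{ij} N`), then there is `L ∈ S` with `M ≡_i L` and `L ≡_j N`. -/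
theorem networks_amalgamation (κ : Cardinal.{u}) (hκ : Cardinal.aleph0 ≤ κ)
    (A0 A1 : Type u) (h0 : Cardinal.mk A0 = 2 ^ κ) (h1 : Cardinal.mk A1 = κ)
    (M N : ℕ → ℕ → Option (A0 ⊕ A1))
    (hM : IsNetwork M ∧ FinSupport M) (hN : IsNetwork N ∧ FinSupport N)
    (i j : ℕ)
    (hMN : ∀ k l : ℕ, k ≠ i → k ≠ j → l ≠ i → l ≠ j → M k l = N k l) :
    ∃ L : ℕ → ℕ → Option (A0 ⊕ A1), (IsNetwork L ∧ FinSupport L) ∧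
      (∀ k l : ℕ, k ≠ i → l ≠ i → L k l = M k l) ∧
      (∀ k l : ℕ, k ≠ j → l ≠ j → L k l = N k l) := by
  by_cases hij : i = j
  · subst hij
    exact ⟨M, hM, fun _ _ _ _ => rfl, fun k l hk hl => hMN k l hk hk hl hl⟩
  by_cases c1 : ∃ k, k ≠ i ∧ k ≠ j ∧ M j k = none
  · obtain ⟨k, hki, hkj, hk⟩ := c1
    exact net_case M N hM.1 hN i j k hki hkj hij hk hMN
  by_cases c2 : ∃ k, k ≠ i ∧ k ≠ j ∧ N i k = none
  · obtain ⟨k, hki, hkj, hk⟩ := c2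
    obtain ⟨L, hL, ha, hb⟩ := net_case N M hN.1 hM j i k hkj hki (Ne.symm hij) hk
      (fun k l a b c d => (hMN k l b a d c).symm)
    exact ⟨L, hL, hb, ha⟩
  have c1' : ∀ k, k ≠ i → k ≠ j → M j k ≠ none := fun k a b c => c1 ⟨k, a, b, c⟩
  have c2' : ∀ k, k ≠ i → k ≠ j → N i k ≠ none := fun k a b c => c2 ⟨k, a, b, c⟩
  obtain ⟨⟨m1, m2, m3, m4, m5⟩, m6⟩ := hM
  obtain ⟨⟨n1, n2, n3, n4, n5⟩, n6⟩ := hN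
  have hinf : Infinite A1 := by
    rw [Cardinal.infinite_iff, h1]; exact hκ
  obtain ⟨m, hm⟩ := (Set.Finite.union m6 n6).exists_notMem
  have mM : ∀ x y, M x y ≠ some (Sum.inr m) := fun x y h => hm (Or.inl ⟨x, y, h⟩)
  have mN : ∀ x y, N x y ≠ some (Sum.inr m) := fun x y h => hm (Or.inr ⟨x, y, h⟩)
  obtain ⟨L, LM, LN, Lij, Lji⟩ : ∃ L : ℕ → ℕ → Option (A0 ⊕ A1),
      (∀ k l : ℕ, k ≠ i → l ≠ i → L k l = M k l) ∧
      (∀ k l : ℕ, k ≠ j → l ≠ j → L k l = N k l) ∧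
      L i j = some (Sum.inr m) ∧ L j i = some (Sum.inr m) := by
    refine ⟨fun x y => if (x = i ∧ y = j) ∨ (x = j ∧ y = i) then some (Sum.inr m)
      else if x = i ∨ y = i then N x y else M x y, ?_, ?_, ?_, ?_⟩
    · intro k l hk hl
      simp [hk, hl]
    · intro k l hk hl
      by_cases a : k = i ∨ l = i
      · simp [hk, hl, a]
      · push Not at a
        simp [hk, hl, a, hMN]
    · simp
    · simp
  have tri : ∀ x y, (x ≠ i ∧ y ≠ i) ∨ (x ≠ j ∧ y ≠ j) ∨ (x = i ∧ y = j) ∨ (x = j ∧ y = i) := by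
    intro x y; omega
  have Lxx : ∀ x, L x x = none := by
    intro x
    by_cases h : x = i
    · rw [LN x x (by omega) (by omega), n1]
    · rw [LM x x h h, m1]
  have Lsym : ∀ x y, L x y = L y x := by
    intro x y
    rcases tri x y with h | h | h | h
    · rw [LM x y h.1 h.2, LM y x h.2 h.1, m2]
    · rw [LN x y h.1 h.2, LN y x h.2 h.1, n2]
    · rw [h.1, h.2, Lij, Lji]
    · rw [h.1, h.2, Lij, Lji]
  have Lm : ∀ x y, L x y = some (Sum.inr m) → (x = i ∧ y = j) ∨ (x = j ∧ y = i) := by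
    intro x y e
    rcases tri x y with h | h | h
    · exact absurd ((LM x y h.1 h.2).symm.trans e) (mM x y)
    · exact absurd ((LN x y h.1 h.2).symm.trans e) (mN x y)
    · exact h
  -- a triangle avoids `i`, avoids `j`, or has an edge `ij`
  have tri3 : ∀ x y z, (x ≠ i ∧ y ≠ i ∧ z ≠ i) ∨ (x ≠ j ∧ y ≠ j ∧ z ≠ j) ∨
      L x y = some (Sum.inr m) ∨ L y z = some (Sum.inr m) ∨ L x z = some (Sum.inr m) := by
    intro x y z
    have Le : ∀ x y, (x = i ∧ y = j) ∨ (x = j ∧ y = i) → L x y = some (Sum.inr m) := by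
      rintro x y (⟨rfl, rfl⟩ | ⟨rfl, rfl⟩)
      · exact Lij
      · exact Lji
    have h : (x ≠ i ∧ y ≠ i ∧ z ≠ i) ∨ (x ≠ j ∧ y ≠ j ∧ z ≠ j) ∨
        ((x = i ∧ y = j) ∨ (x = j ∧ y = i)) ∨ ((y = i ∧ z = j) ∨ (y = j ∧ z = i)) ∨
        ((x = i ∧ z = j) ∨ (x = j ∧ z = i)) := by omega
    exact h.imp_right (Or.imp_right (Or.imp (Le x y) (Or.imp (Le y z) (Le x z))))
  refine ⟨L, ⟨⟨Lxx, Lsym, ?_, ?_, ?_⟩, ?_⟩, LM, LN⟩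
  · intro x y e z
    by_cases hxy : x = y
    · rw [hxy]
    have Lne : ∀ k, k ≠ i → k ≠ j → L i k ≠ none ∧ L j k ≠ none := by
      intro k hi hj
      rw [LN i k hij hj, LM j k (Ne.symm hij) hi]
      exact ⟨c2' k hi hj, c1' k hi hj⟩
    have key : ∀ x y, x ≠ y → L x y = none → x ≠ i ∧ x ≠ j := by
      intro x y hxy e
      constructor
      · rintro rfl
        by_cases hy : y = j
        · subst hy; simp [Lij] at e
        · exact (Lne y (Ne.symm hxy) hy).1 e
      · rintro rfl
        by_cases hy : y = i
        · subst hy; simp [Lji] at e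
        · exact (Lne y hy (Ne.symm hxy)).2 e
    obtain ⟨xi, xj⟩ := key x y hxy e
    obtain ⟨yi, yj⟩ := key y x (Ne.symm hxy) (by rw [Lsym, e])
    by_cases hz : z = i
    · have hz' : z ≠ j := by omega
      rw [LN x z xj hz', LN y z yj hz']
      exact n3 x y (by rw [← LN x y xj yj, e]) z
    · rw [LM x z xi hz, LM y z yi hz]
      exact m3 x y (by rw [← LM x y xi yi, e]) z
  · rintro ⟨x, y, z, a, e1, e2, e3⟩
    rcases tri3 x y z with ⟨hx, hy, hz⟩ | ⟨hx, hy, hz⟩ | h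
    · exact m4 ⟨x, y, z, a, by rw [← LM x y hx hy, e1], by rw [← LM y z hy hz, e2],
        by rw [← LM x z hx hz, e3]⟩
    · exact n4 ⟨x, y, z, a, by rw [← LN x y hx hy, e1], by rw [← LN y z hy hz, e2],
        by rw [← LN x z hx hz, e3]⟩
    · rw [e1, e2, e3] at h
      have h' : (some (Sum.inr a) : Option (A0 ⊕ A1)) = some (Sum.inr m) := by tauto
      rw [h'] at e1 e2 e3
      have := Lm _ _ e1
      have := Lm _ _ e2
      have := Lm _ _ e3
      omega
  · rintro ⟨x, y, z, ⟨a, e1⟩, ⟨b, e2⟩, ⟨c, e3⟩⟩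
    rcases tri3 x y z with ⟨hx, hy, hz⟩ | ⟨hx, hy, hz⟩ | h
    · exact m5 ⟨x, y, z, ⟨a, by rw [← LM x y hx hy, e1]⟩, ⟨b, by rw [← LM y z hy hz, e2]⟩,
        ⟨c, by rw [← LM x z hx hz, e3]⟩⟩
    · exact n5 ⟨x, y, z, ⟨a, by rw [← LN x y hx hy, e1]⟩, ⟨b, by rw [← LN y z hy hz, e2]⟩,
        ⟨c, by rw [← LN x z hx hz, e3]⟩⟩
    · rw [e1, e2, e3] at h
      simp at h
  · refine Set.Finite.subset ((Set.Finite.union m6 n6).union (Set.finite_singleton m)) ?_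
    rintro a ⟨x, y, e⟩
    rcases tri x y with h | h | ⟨rfl, rfl⟩ | ⟨rfl, rfl⟩
    · exact Or.inl (Or.inl ⟨x, y, by rw [← LM x y h.1 h.2, e]⟩)
    · exact Or.inl (Or.inr ⟨x, y, by rw [← LN x y h.1 h.2, e]⟩)
    · right; rw [Lij] at e; simpa using e.symm
    · right; rw [Lji] at e; simpa using e.symm
end

section
/- For every consistent countable first-order theory T (in a countable language, having an infinite model) there exists a family (M_i : i < 2^{ℵ₀}) of countable models of T that overlap only on principal types: whenever i ≠ j, every complete type of a finite tuple that is realized both in M_i and in M_j is principal, i.e. isolated by a single formula ψ(x̄) consistent with T such that T ⊨ ∀x̄ (ψ → φ) for every formula φ in the type. -/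
open FirstOrder FirstOrder.Language Cardinal

/-- The complete type of the tuple `a` in the structure `M`: the set of all formulas in the
appropriate number of free variables that `a` satisfies in `M`. -/
def tpSet (L : FirstOrder.Language) (M : Type*) [L.Structure M] {m : ℕ} (a : Fin m → M) :
    Set (L.Formula (Fin m)) :=
  {φ | φ.Realize a}

section Overlap

/-- Finitely many dense downward-closed sets have dense intersection. -/
theorem finite_dense_inter {Q : Type*} [Preorder Q] {J : Type*} (s : Finset J) (D : J → Set Q)
    (hdown : ∀ j, ∀ p q, q ≤ p → p ∈ D j → q ∈ D j)
    (hdense : ∀ j ∈ s, ∀ p, ∃ q ≤ p, q ∈ D j) (p : Q) :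
    ∃ q ≤ p, ∀ j ∈ s, q ∈ D j := by
  classical
  induction s using Finset.induction_on with
  | empty => exact ⟨p, le_rfl, by simp⟩
  | insert a s ha ih =>
    obtain ⟨q, hq, hqs⟩ := ih (fun j hj => hdense j (Finset.mem_insert_of_mem hj))
    obtain ⟨r, hr, hra⟩ := hdense a (Finset.mem_insert_self _ _) q
    refine ⟨r, hr.trans hq, fun j hj => ?_⟩
    rcases Finset.mem_insert.1 hj with rfl | hj
    · exact hra
    · exact hdown j q r hr (hqs j hj)

/-- One level of the tree construction. -/
theorem tree_step {P : Type*} [Preorder P] (D : ℕ → Set P) (E : ℕ → Set (P × P))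
    (hD : ∀ n p q, q ≤ p → p ∈ D n → q ∈ D n)
    (hE : ∀ n p q, q ≤ p → p ∈ E n → q ∈ E n)
    (hDd : ∀ n p, ∃ q ≤ p, q ∈ D n)
    (hEd : ∀ n p, ∃ q ≤ p, q ∈ E n) {I : Type*} [Finite I] (n : ℕ) (g : I → P) :
    ∃ g' : I → P, g' ≤ g ∧ (∀ i, ∀ k ≤ n, g' i ∈ D k) ∧
      ∀ i j, i ≠ j → ∀ k ≤ n, (g' i, g' j) ∈ E k := by
  classical
  have := Fintype.ofFinite I
  obtain ⟨g₁, h₁, h₁'⟩ := finite_dense_inter (Q := I → P) (Finset.univ ×ˢ Finset.range (n + 1))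
    (fun j : I × ℕ => {g : I → P | g j.1 ∈ D j.2})
    (fun j (p q : I → P) hqp h => hD _ _ _ (Pi.le_def.1 hqp j.1) h)
    (fun j _ (p : I → P) => by
      obtain ⟨q, hq, hq'⟩ := hDd j.2 (p j.1)
      refine ⟨Function.update p j.1 q, ?_, by simpa using hq'⟩
      exact update_le_iff.2 ⟨hq, fun _ _ => le_rfl⟩) g
  obtain ⟨g₂, h₂, h₂'⟩ := finite_dense_inter (Q := I → P) (Finset.univ ×ˢ Finset.range (n + 1))
    (fun j : (I × I) × ℕ => {g : I → P | j.1.1 ≠ j.1.2 → (g j.1.1, g j.1.2) ∈ E j.2})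
    (fun j (p q : I → P) hqp h hne => hE _ _ _ ⟨Pi.le_def.1 hqp j.1.1, Pi.le_def.1 hqp j.1.2⟩ (h hne))
    (fun j _ (p : I → P) => by
      by_cases hne : j.1.1 = j.1.2
      · exact ⟨p, le_rfl, fun h => absurd hne h⟩
      obtain ⟨q, hq, hq'⟩ := hEd j.2 (p j.1.1, p j.1.2)
      refine ⟨Function.update (Function.update p j.1.1 q.1) j.1.2 q.2, ?_, fun _ => ?_⟩
      · refine update_le_iff.2 ⟨hq.2, fun i _ => ?_⟩
        have : Function.update p j.1.1 q.1 ≤ p := update_le_iff.2 ⟨hq.1, fun _ _ => le_rfl⟩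
        exact this i
      · simpa [Function.update_of_ne hne] using hq') g₁
  refine ⟨g₂, h₂.trans h₁, fun i k hk => ?_, fun i j hij k hk => ?_⟩
  · exact hD _ _ _ (h₂ i) (h₁' (i, k) (by simp; omega))
  · exact h₂' ((i, j), k) (by simp; omega) hij

/-- A perfect tree of sufficiently mutually generic filters. -/
theorem perfect_tree {P : Type*} [Preorder P] (p₀ : P) (D : ℕ → Set P) (E : ℕ → Set (P × P))
    (hD : ∀ n p q, q ≤ p → p ∈ D n → q ∈ D n)
    (hE : ∀ n p q, q ≤ p → p ∈ E n → q ∈ E n)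
    (hDd : ∀ n p, ∃ q ≤ p, q ∈ D n)
    (hEd : ∀ n p, ∃ q ≤ p, q ∈ E n) :
    ∃ f : (ℕ → Bool) → ℕ → P, (∀ x, Antitone (f x)) ∧ (∀ x n, ∃ k, f x k ∈ D n) ∧
      ∀ x y, x ≠ y → ∀ n, ∃ k, (f x k, f y k) ∈ E n := by
  choose F hF1 hF2 hF3 using fun n (g : (Fin n → Bool) → P) =>
    tree_step D E hD hE hDd hEd n g
  let G : (n : ℕ) → (Fin n → Bool) → P := fun n =>
    Nat.rec (F 0 (fun _ => p₀)) (fun n g => F (n + 1) (fun s => g (fun i => s i.castSucc))) n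
  have hG2 : ∀ n s k, k ≤ n → G n s ∈ D k := by
    intro n s k hk
    cases n with
    | zero => exact hF2 _ _ s k hk
    | succ n => exact hF2 _ _ s k hk
  have hG3 : ∀ n s t, s ≠ t → ∀ k ≤ n, (G n s, G n t) ∈ E k := by
    intro n s t hst k hk
    cases n with
    | zero => exact hF3 _ _ s t hst k hk
    | succ n => exact hF3 _ _ s t hst k hk
  refine ⟨fun x n => G n (fun i => x i), fun x => antitone_nat_of_succ_le fun n => ?_,
    fun x n => ⟨n, hG2 _ _ _ le_rfl⟩, fun x y hxy n => ?_⟩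
  · exact hF1 (n + 1) (fun s => G n (fun i => s i.castSucc)) (fun i => x i)
  · obtain ⟨m, hm⟩ := Function.ne_iff.1 hxy
    refine ⟨max n (m + 1), hG3 _ _ _ (fun h => hm ?_) n (le_max_left _ _)⟩
    exact congrFun h ⟨m, by omega⟩

variable {L : FirstOrder.Language.{0, 0}}

theorem realize_congr_free {α : Type} [DecidableEq α] {M : Type} [L.Structure M]
    (φ : L.Formula α) (v w : α → M)
    (h : ∀ a ∈ BoundedFormula.freeVarFinset φ, v a = w a) : φ.Realize v ↔ φ.Realize w := by
  unfold Formula.Realize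
  rw [← BoundedFormula.realize_restrictFreeVar (φ := φ) (f := id) (v := fun a => v a) v
      (fun _ => rfl),
    ← BoundedFormula.realize_restrictFreeVar (φ := φ) (f := id) (v := fun a => v a) w
      (fun a => h a a.2)]

/-- Conditions: formulas in variables indexed by `ℕ` consistent with `T`. -/
def Cond (T : L.Theory) : Type :=
  {φ : L.Formula ℕ // ∃ (N : Theory.ModelType.{0, 0, 0} T) (v : ℕ → N), φ.Realize v}

instance condPreorder (T : L.Theory) : Preorder (Cond T) where
  le p q := ∀ (N : Theory.ModelType.{0, 0, 0} T) (v : ℕ → N), p.1.Realize v → q.1.Realize v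
  le_refl _ _ _ h := h
  le_trans _ _ _ h h' N v hv := h' N v (h N v hv)

/-- Henkin witness requirement. -/
def HenkinSet (T : L.Theory) (χ : L.Formula (Option ℕ)) : Set (Cond T) :=
  {p | ∃ k, ∀ (N : Theory.ModelType.{0, 0, 0} T) (v : ℕ → N), p.1.Realize v → ∀ d : N,
    χ.Realize (fun o => o.elim d v) → χ.Realize (fun o => o.elim (v k) v)}

theorem henkin_dense (T : L.Theory) (χ : L.Formula (Option ℕ)) (p : Cond T) :
    ∃ q ≤ p, q ∈ HenkinSet T χ := by
  classical
  by_cases h : ∃ (N : Theory.ModelType.{0, 0, 0} T) (v : ℕ → N) (d : N), p.1.Realize v ∧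
      χ.Realize (fun o => o.elim d v)
  · obtain ⟨N, v, d, hp, hχ⟩ := h
    obtain ⟨k, hk⟩ := Infinite.exists_notMem_finset
      (BoundedFormula.freeVarFinset p.1 ∪
        (BoundedFormula.freeVarFinset χ).image (fun o => o.getD 0))
    rw [Finset.mem_union, not_or] at hk
    have key : ∀ (N : Theory.ModelType.{0, 0, 0} T) (w : ℕ → N),
        (χ.relabel (fun o : Option ℕ => o.getD k)).Realize w ↔
          χ.Realize (fun o => o.elim (w k) w) := by
      intro N w
      rw [Formula.realize_relabel]
      have : w ∘ (fun o : Option ℕ => o.getD k) = fun o => o.elim (w k) w := by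
        funext o; cases o <;> rfl
      rw [this]
    refine ⟨⟨p.1 ⊓ χ.relabel (fun o => o.getD k), N, Function.update v k d, ?_⟩, ?_, k, ?_⟩
    · rw [Formula.realize_inf]
      refine ⟨(realize_congr_free p.1 _ v ?_).2 hp, (key _ _).2 ?_⟩
      · intro a ha
        have hne : a ≠ k := fun e => hk.1 (e ▸ ha)
        exact Function.update_of_ne hne _ _
      · refine (realize_congr_free χ _ _ ?_).2 hχ
        rintro (_ | a) ha
        · simp
        · have : a ≠ k := fun e => hk.2 (Finset.mem_image.2 ⟨some a, ha, by simp [e]⟩)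
          simp [this]
    · intro N w hw
      exact (Formula.realize_inf.1 hw).1
    · intro N w hw _ _
      exact (key _ _).1 (Formula.realize_inf.1 hw).2
  · push Not at h
    exact ⟨p, le_rfl, 0, fun N v hv d hd => absurd hd (h N v d hv)⟩

/-- Either the two conditions force the types of the tuples apart, or the first one decides
every formula about its tuple. -/
def SepSet (T : L.Theory) (t : Σ m : ℕ, (Fin m → ℕ) × (Fin m → ℕ)) : Set (Cond T × Cond T) :=
  {pq | (∃ θ : L.Formula (Fin t.1),
      (∀ (N : Theory.ModelType.{0, 0, 0} T) (v : ℕ → N),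
        pq.1.1.Realize v → θ.Realize (v ∘ t.2.1)) ∧
      (∀ (N : Theory.ModelType.{0, 0, 0} T) (v : ℕ → N),
        pq.2.1.Realize v → ¬ θ.Realize (v ∘ t.2.2))) ∨
    ∀ θ : L.Formula (Fin t.1),
      (∀ (N : Theory.ModelType.{0, 0, 0} T) (v : ℕ → N),
        pq.1.1.Realize v → θ.Realize (v ∘ t.2.1)) ∨
      (∀ (N : Theory.ModelType.{0, 0, 0} T) (v : ℕ → N),
        pq.1.1.Realize v → ¬ θ.Realize (v ∘ t.2.1))}

theorem sep_dense (T : L.Theory) (t : Σ m : ℕ, (Fin m → ℕ) × (Fin m → ℕ))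
    (pq : Cond T × Cond T) : ∃ q ≤ pq, q ∈ SepSet T t := by
  obtain ⟨m, a, b⟩ := t
  obtain ⟨p, q⟩ := pq
  by_cases h : ∃ θ : L.Formula (Fin m),
      (∃ (N : Theory.ModelType.{0, 0, 0} T) (v : ℕ → N), p.1.Realize v ∧ θ.Realize (v ∘ a)) ∧
      (∃ (N : Theory.ModelType.{0, 0, 0} T) (v : ℕ → N), q.1.Realize v ∧ ¬ θ.Realize (v ∘ b))
  · obtain ⟨θ, ⟨N, v, hv, hv'⟩, ⟨N', w, hw, hw'⟩⟩ := h
    refine ⟨⟨⟨p.1 ⊓ θ.relabel a, N, v, ?_⟩, ⟨q.1 ⊓ (θ.relabel b).not, N', w, ?_⟩⟩,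
      ⟨?_, ?_⟩, Or.inl ⟨θ, ?_, ?_⟩⟩
    · exact Formula.realize_inf.2 ⟨hv, Formula.realize_relabel.2 hv'⟩
    · refine Formula.realize_inf.2 ⟨hw, ?_⟩
      rw [Formula.realize_not, Formula.realize_relabel]
      exact hw'
    · intro N u hu
      exact (Formula.realize_inf.1 hu).1
    · intro N u hu
      exact (Formula.realize_inf.1 hu).1
    · intro N u hu
      exact Formula.realize_relabel.1 (Formula.realize_inf.1 hu).2
    · intro N u hu
      have := (Formula.realize_inf.1 hu).2
      rwa [Formula.realize_not, Formula.realize_relabel] at this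
  · push Not at h
    refine ⟨(p, q), le_rfl, Or.inr fun θ => ?_⟩
    by_contra hc
    push Not at hc
    obtain ⟨⟨N, v, hv, hv'⟩, ⟨N', w, hw, hw'⟩⟩ := hc
    obtain ⟨K, u, hu⟩ := q.2
    have h1 := h θ ⟨N', w, hw, hw'⟩ K u hu
    have h2 := h θ.not ⟨N, v, hv, by rwa [Formula.realize_not]⟩ K u hu
    rw [Formula.realize_not] at h2
    exact h2 h1

/-- Projection of a condition to the variables of a finite tuple. -/
theorem exists_proj (T : L.Theory) (p : L.Formula ℕ) {m : ℕ} (a : Fin m → ℕ) :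
    ∃ ψ : L.Formula (Fin m), ∀ (N : Theory.ModelType.{0, 0, 0} T) (c : Fin m → N),
      ψ.Realize c ↔ ∃ v : ℕ → N, p.Realize v ∧ v ∘ a = c := by
  classical
  let F : Finset ℕ := BoundedFormula.freeVarFinset p ∪ Finset.univ.image a
  have ha : ∀ i, a i ∈ F := fun i => Finset.mem_union_right _ (by simp)
  have hp : ∀ i : BoundedFormula.freeVarFinset p, (i : ℕ) ∈ F :=
    fun i => Finset.mem_union_left _ i.2
  let p' : L.Formula (Fin m ⊕ F) :=
    BoundedFormula.restrictFreeVar p (fun i => Sum.inr ⟨i, hp i⟩)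
  let e : L.Formula (Fin m ⊕ F) := Formula.iInf (fun i : Fin m =>
    Term.equal (Term.var (Sum.inl i)) (Term.var (Sum.inr ⟨a i, ha i⟩)))
  have hp' : ∀ (N : Theory.ModelType.{0, 0, 0} T) (c : Fin m → N) (u : F → N) (v : ℕ → N),
      (∀ i : F, v i = u i) → (p'.Realize (Sum.elim c u) ↔ p.Realize v) := by
    intro N c u v huv
    exact BoundedFormula.realize_restrictFreeVar v (fun i => (huv ⟨i, hp i⟩).symm)
  have he : ∀ (N : Theory.ModelType.{0, 0, 0} T) (c : Fin m → N) (u : F → N),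
      e.Realize (Sum.elim c u) ↔ ∀ i, c i = u ⟨a i, ha i⟩ := by
    intro N c u
    simp [e, Formula.realize_iInf, Formula.realize_equal]
  refine ⟨Formula.iExs F (p' ⊓ e), fun N c => ?_⟩
  rw [Formula.realize_iExs]
  constructor
  · rintro ⟨u, hu⟩
    rw [Formula.realize_inf, he] at hu
    let v : ℕ → N := fun n => if h : n ∈ F then u ⟨n, h⟩ else Classical.choice N.nonempty'
    have hv : ∀ i : F, v i = u i := fun i => by simp [v]
    refine ⟨v, (hp' N c u v hv).1 hu.1, funext fun i => ?_⟩
    rw [hu.2 i]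
    exact hv ⟨a i, ha i⟩
  · rintro ⟨v, hv, rfl⟩
    refine ⟨fun i => v i, ?_⟩
    rw [Formula.realize_inf, he]
    exact ⟨(hp' N _ _ v (fun _ => rfl)).2 hv, fun _ => rfl⟩

/-- Compactness: a decreasing sequence of conditions is realized in a model. -/
theorem exists_realization (T : L.Theory) (f : ℕ → Cond T) (hf : Antitone f) :
    ∃ (N : Theory.ModelType.{0, 0, 0} T) (v : ℕ → N), ∀ n, (f n).1.Realize v := by
  let Th : ℕ → (L[[ℕ]]).Theory := fun n =>
    (L.lhomWithConstants ℕ).onTheory T ∪ {σ | ∃ k ≤ n, σ = Formula.equivSentence (f k).1}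
  have hdir : Directed (· ⊆ ·) Th := by
    apply Monotone.directed_le
    intro a b hab
    refine Set.union_subset_union_right _ ?_
    rintro σ ⟨k, hk, rfl⟩
    exact ⟨k, hk.trans hab, rfl⟩
  have hsat : Theory.IsSatisfiable (⋃ n, Th n) := by
    rw [Theory.isSatisfiable_directed_union_iff hdir]
    intro n
    obtain ⟨N, v, hv⟩ := (f n).2
    let := constantsOn.structure v
    have h1 : N ⊨ (L.lhomWithConstants ℕ).onTheory T :=
      (LHom.onTheory_model _ T).2 N.is_model
    have h2 : N ⊨ Th n := by
      refine Theory.Model.union h1 ⟨?_⟩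
      rintro σ ⟨k, hk, rfl⟩
      rw [Formula.realize_equivSentence]
      exact hf hk N v hv
    exact Theory.Model.isSatisfiable N
  obtain ⟨⟨N⟩⟩ := hsat
  have hN : ∀ n, Theory.Model N (Th n) := fun n => Theory.Model.mono (by assumption) (Set.subset_iUnion Th n)
  let : L.Structure N := (L.lhomWithConstants ℕ).reduct N
  have : (L.lhomWithConstants ℕ).IsExpansionOn N := LHom.isExpansionOn_reduct _ _
  have hT : N ⊨ T := (LHom.onTheory_model (L.lhomWithConstants ℕ) T).1
    ((hN 0).mono Set.subset_union_left)
  refine ⟨Theory.ModelType.of T N, fun a => (L.con a : N), fun n => ?_⟩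
  have := (hN n).realize_of_mem (Formula.equivSentence (f n).1) (Or.inr ⟨n, le_rfl, rfl⟩)
  have h2 := (Formula.realize_equivSentence N _).1 this
  exact h2

/-- A sequence of conditions meeting all Henkin sets yields an enumerated model. -/
theorem exists_enumerated_model (T : L.Theory) (f : ℕ → Cond T) (hf : Antitone f)
    (hH : ∀ χ, ∃ k, f k ∈ HenkinSet T χ) :
    ∃ (M : Theory.ModelType.{0, 0, 0} T) (v : ℕ → M), Function.Surjective v ∧
      ∀ n, (f n).1.Realize v := by
  obtain ⟨N, v, hv⟩ := exists_realization T f hf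
  have hw : ∀ (χ : L.Formula (Option ℕ)) (d : N), χ.Realize (fun o => o.elim d v) →
      ∃ k, χ.Realize (fun o => o.elim (v k) v) := by
    intro χ d hd
    obtain ⟨n, k, hk⟩ := hH χ
    exact ⟨k, hk N v (hv n) d hd⟩
  let S : L.Substructure N :=
    { carrier := Set.range v
      fun_mem := by
        intro n g x hx
        choose a ha using hx
        obtain ⟨k, hk⟩ := hw (Term.equal (Term.var none)
          (Term.func g (fun i => Term.var (some (a i))))) (Structure.funMap g x) (by
            simp [Formula.realize_equal, ha])
        refine ⟨k, ?_⟩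
        simpa [Formula.realize_equal, ha] using hk }
  have hS : S.IsElementary := by
    refine S.isElementary_of_exists ?_
    intro n φ x d hd
    have hx : ∀ i, ∃ k, v k = x i := fun i => (x i).2
    choose a ha using hx
    have key : ∀ d : N, (φ.toFormula.relabel (Sum.elim Empty.elim
        (Fin.snoc (fun i => some (a i)) none : Fin (n + 1) → Option ℕ))).Realize
        (fun o => o.elim d v) ↔ φ.Realize default (Fin.snoc ((↑) ∘ x) d : _ → N) := by
      intro d
      rw [Formula.realize_relabel, BoundedFormula.realize_toFormula]
      refine iff_of_eq ?_
      congr 1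
      · exact Subsingleton.elim _ _
      · funext i
        refine Fin.lastCases ?_ (fun i => ?_) i
        · simp
        · simp [ha]
    obtain ⟨k, hk⟩ := hw _ d ((key d).2 hd)
    exact ⟨⟨v k, k, rfl⟩, (key (v k)).1 hk⟩
  let S' : L.ElementarySubstructure N := ⟨S, hS⟩
  have : Nonempty S' := ⟨⟨v 0, 0, rfl⟩⟩
  refine ⟨Theory.ModelType.of T S', fun k => ⟨v k, k, rfl⟩, ?_, fun n => ?_⟩
  · rintro ⟨_, k, rfl⟩
    exact ⟨k, rfl⟩
  · exact (S'.subtype.map_formula (f n).1 (fun k => (⟨v k, k, rfl⟩ : S'))).1 (hv n)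

end Overlap

/-- For every consistent countable theory with an infinite model there is a family of
`2^ℵ₀` countable models overlapping only on principal types: any complete type of a finite
tuple realized in two distinct models of the family is isolated by a single formula `ψ`
consistent with `T` such that `T ⊨ ∀x̄ (ψ → φ)` for every `φ` in the type. -/
theorem countable_theory_models_overlap_principal (L : FirstOrder.Language.{0, 0})
    (hL : L.card ≤ ℵ₀) (T : L.Theory) (hT : T.Countable)
    (hinf : ∃ M : Theory.ModelType.{0, 0, 0} T, Infinite M) :
    ∃ (ι : Type) (_ : #ι = 2 ^ ℵ₀) (Mod : ι → Theory.ModelType.{0, 0, 0} T),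
      (∀ i, Countable (Mod i)) ∧
      ∀ i j : ι, i ≠ j →
        ∀ (m : ℕ) (a : Fin m → Mod i) (b : Fin m → Mod j),
          tpSet L (Mod i) a = tpSet L (Mod j) b →
          ∃ ψ : L.Formula (Fin m),
            (∃ (N : Theory.ModelType.{0, 0, 0} T) (c : Fin m → N), ψ.Realize c) ∧
            ∀ φ ∈ tpSet L (Mod i) a, ∀ (N : Theory.ModelType.{0, 0, 0} T)
              (c : Fin m → N), ψ.Realize c → φ.Realize c := by
  classical
  have : Countable L.Symbols := Cardinal.mk_le_aleph0_iff.1 hL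
  obtain ⟨M₀, -⟩ := hinf
  let p₀ : Cond T := ⟨⊤, M₀, fun _ => Classical.choice M₀.nonempty', by simp⟩
  have : Nonempty (L.Formula (Option ℕ)) := ⟨⊤⟩
  have : Nonempty (Σ m : ℕ, (Fin m → ℕ) × (Fin m → ℕ)) := ⟨⟨0, 0, 0⟩⟩
  obtain ⟨eD, heD⟩ := exists_surjective_nat (L.Formula (Option ℕ))
  obtain ⟨eE, heE⟩ := exists_surjective_nat (Σ m : ℕ, (Fin m → ℕ) × (Fin m → ℕ))
  obtain ⟨f, hf, hfD, hfE⟩ := perfect_tree p₀ (fun n => HenkinSet T (eD n))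
    (fun n => SepSet T (eE n))
    (by
      rintro n p q hqp ⟨k, hk⟩
      exact ⟨k, fun N v hv => hk N v (hqp N v hv)⟩)
    (by
      rintro n p q hqp (⟨θ, h1, h2⟩ | h)
      · exact Or.inl ⟨θ, fun N v hv => h1 N v (hqp.1 N v hv), fun N v hv => h2 N v (hqp.2 N v hv)⟩
      · refine Or.inr fun θ => (h θ).imp ?_ ?_
        · exact fun h N v hv => h N v (hqp.1 N v hv)
        · exact fun h N v hv => h N v (hqp.1 N v hv))
    (fun n p => henkin_dense T _ p) (fun n p => sep_dense T _ p)
  choose Mod v hsurj hreal using fun x => exists_enumerated_model T (f x) (hf x) (fun χ => by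
    obtain ⟨n, rfl⟩ := heD χ
    exact hfD x n)
  refine ⟨ℕ → Bool, by simp, Mod, fun i => (hsurj i).countable, ?_⟩
  intro x y hxy m a b hab
  choose ka hka using fun i => hsurj x (a i)
  choose kb hkb using fun i => hsurj y (b i)
  obtain rfl : v x ∘ ka = a := funext hka
  obtain rfl : v y ∘ kb = b := funext hkb
  obtain ⟨n, hn⟩ := heE ⟨m, ka, kb⟩
  obtain ⟨k, hk⟩ := hfE x y hxy n
  rw [hn] at hk
  rcases hk with ⟨θ, h1, h2⟩ | h
  · have h3 : θ ∈ tpSet L (Mod x) (v x ∘ ka) := h1 _ _ (hreal x k)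
    rw [hab] at h3
    exact absurd h3 (h2 _ _ (hreal y k))
  · obtain ⟨ψ, hψ⟩ := exists_proj T (f x k).1 ka
    refine ⟨ψ, ⟨Mod x, v x ∘ ka, (hψ _ _).2 ⟨v x, hreal x k, rfl⟩⟩, ?_⟩
    intro φ hφ N c hc
    obtain ⟨w, hw, rfl⟩ := (hψ _ _).1 hc
    rcases h φ with h | h
    · exact h N w hw
    · exact absurd hφ (h _ _ (hreal x k))
end
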